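/- arXiv:2007.07727 — 3 statements merged into one kernel-verified Lean document; each statement's English description precedes it below -/
import Mathlib

section
/- Let ψ : ℝ → ℂ be a 2π-periodic function satisfying the Lipschitz condition |ψ(u) − ψ(v)| ≤ C|u − v| for all u, v ∈ [−π, π], let φ(u) = ψ(u) sinh(u), and let f(x) = ∫_{−π}^{π} φ(u) [2/π + x cosh(u) M₀(x cosh u)] du for x > 0. Then for every t > 0, ∫₀^t f(y)/(t² − y²)^{1/2} dy = ∫_{−π}^{π} e^{−t cosh u} φ(u) du. -/
/-!
The substitution `y = t sin α` turns the left-hand side into `∫₀^{π/2} f(t sin α) dα`, which removes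
the endpoint singularity. The integrand is then continuous on a compact rectangle in `(α, u)`, so
the order of integration can be exchanged, and it remains to show, for `s = t cosh u`, that
`∫₀^{π/2} (2/π + s sin α M₀(s sin α)) dα = e^{-s}` (`integral_struveKernel_sin`).

By the definition of `M₀` this says that
`∫₀^{π/2} ∫₀^{π/2} s sin α e^{-s sin α cos θ} dθ dα = (π/2) (1 - e^{-s})`. Expanding the exponential
and integrating termwise, the coefficients are `Wₙ Wₙ₊₁ / n!` with the Wallis integrals
`Wₙ = ∫₀^{π/2} sinⁿ`, and `(n + 1) Wₙ Wₙ₊₁ = π / 2` (`wallis_mul_succ`) resums the series.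
-/

open MeasureTheory Real

/-- The modified Struve function `M₀(z) = −(2/π) ∫₀^{π/2} e^{−z cos θ} dθ`. -/
noncomputable def struveM (z : ℂ) : ℂ :=
  -(2 / π) * ∫ θ in (0 : ℝ)..(π / 2), Complex.exp (-z * Real.cos θ)

/-- The Wallis integral `Wₙ = ∫₀^{π/2} sinⁿ α dα`. -/
noncomputable def wallis (n : ℕ) : ℝ := ∫ α in (0 : ℝ)..(π / 2), sin α ^ n

/-- The kernel `2/π + x M₀(x)` at a real argument, as a real number. -/
noncomputable def struveKernel (x : ℝ) : ℝ :=
  2 / π + x * (-(2 / π) * ∫ θ in (0 : ℝ)..(π / 2), exp (-x * cos θ))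

lemma wallis_mul_succ (n : ℕ) : (n + 1) * (wallis n * wallis (n + 1)) = π / 2 := by
  induction n with
  | zero => simp [wallis]
  | succ k ih =>
    have h : wallis (k + 2) = (k + 1) / (k + 2) * wallis k := by
      simp [wallis, integral_sin_pow]
    rw [h, ← ih]
    push_cast
    field_simp
    ring

lemma integral_cos_pow_eq_wallis (n : ℕ) : ∫ θ in (0 : ℝ)..(π / 2), cos θ ^ n = wallis n := by
  have h := intervalIntegral.integral_comp_sub_left (a := 0) (b := π / 2)
    (fun x => sin x ^ n) (π / 2)
  simpa [sin_pi_div_two_sub, wallis] using h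

lemma abs_wallis_le (n : ℕ) : |wallis n| ≤ π / 2 := by
  have h := intervalIntegral.norm_integral_le_of_norm_le_const (a := 0) (b := π / 2) (C := 1)
    (f := fun x => sin x ^ n) (fun x _ => by
      rw [norm_pow]
      exact pow_le_one₀ (norm_nonneg _) (abs_sin_le_one x))
  simpa [wallis, abs_of_pos pi_div_two_pos] using h

lemma hasSum_exp_real (x : ℝ) : HasSum (fun n : ℕ => x ^ n / n.factorial) (exp x) := by
  rw [Real.exp_eq_exp_ℝ]
  exact NormedSpace.expSeries_div_hasSum_exp x

/-- Termwise integration over a bounded interval under a uniform summable bound. -/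
lemma hasSum_integral_of_uniform_bound {F : ℕ → ℝ → ℝ} {f : ℝ → ℝ} {a b : ℝ} (c : ℕ → ℝ)
    (hc : Summable c) (hF : ∀ n, Continuous (F n)) (hb : ∀ n x, |F n x| ≤ c n)
    (hlim : ∀ x, HasSum (fun n => F n x) (f x)) :
    HasSum (fun n => ∫ x in a..b, F n x) (∫ x in a..b, f x) :=
  intervalIntegral.hasSum_integral_of_dominated_convergence (fun n _ => c n)
    (fun n => (hF n).aestronglyMeasurable)
    (fun n => .of_forall fun x _ => hb n x)
    (.of_forall fun _ _ => hc)
    intervalIntegrable_const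
    (.of_forall fun x _ => hlim x)

lemma hasSum_integral_exp_mul_cos (x : ℝ) :
    HasSum (fun n : ℕ => (-x) ^ n / n.factorial * wallis n)
      (∫ θ in (0 : ℝ)..(π / 2), exp (-x * cos θ)) := by
  have h := hasSum_integral_of_uniform_bound (a := 0) (b := π / 2)
    (F := fun n θ => (-x) ^ n / n.factorial * cos θ ^ n) (f := fun θ => exp (-x * cos θ))
    (fun n => |x| ^ n / n.factorial) (hasSum_exp_real |x|).summable
    (fun n => by fun_prop)
    (fun n θ => by
      rw [abs_mul, abs_div, abs_pow, abs_pow, abs_neg, Nat.abs_cast]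
      exact mul_le_of_le_one_right (by positivity)
        (pow_le_one₀ (abs_nonneg _) (abs_cos_le_one θ)))
    (fun θ => by
      convert hasSum_exp_real (-x * cos θ) using 2 with n
      rw [mul_pow]; ring)
  simpa only [intervalIntegral.integral_const_mul, integral_cos_pow_eq_wallis] using h

lemma continuous_struveKernel : Continuous struveKernel := by
  have : Continuous fun x : ℝ => ∫ θ in (0 : ℝ)..(π / 2), exp (-x * cos θ) :=
    intervalIntegral.continuous_parametric_intervalIntegral_of_continuous' (by fun_prop) _ _
  unfold struveKernel
  fun_prop

/-- In spherical coordinates, `s` times the integral of `e^{-s x}` over an octant of the unit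
sphere. -/
lemma integral_sin_mul_integral_exp (s : ℝ) :
    ∫ α in (0 : ℝ)..(π / 2),
      (s * sin α) * ∫ θ in (0 : ℝ)..(π / 2), exp (-(s * sin α) * cos θ)
      = π / 2 * (1 - exp (-s)) := by
  have h := hasSum_integral_of_uniform_bound (a := 0) (b := π / 2)
    (F := fun n α => ((-1) ^ n * s ^ (n + 1) / n.factorial * wallis n) * sin α ^ (n + 1))
    (f := fun α => (s * sin α) * ∫ θ in (0 : ℝ)..(π / 2), exp (-(s * sin α) * cos θ))
    (fun n => |s| ^ n / n.factorial * (|s| * (π / 2)))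
    ((hasSum_exp_real |s|).summable.mul_right _)
    (fun n => by fun_prop)
    (fun n α => by
      rw [abs_mul, abs_mul, abs_div, abs_mul, abs_pow, abs_pow, abs_pow, abs_neg, abs_one,
        one_pow, Nat.abs_cast, one_mul]
      calc |s| ^ (n + 1) / n.factorial * |wallis n| * |sin α| ^ (n + 1)
          ≤ |s| ^ (n + 1) / n.factorial * (π / 2) * 1 := by
            gcongr
            · exact abs_wallis_le n
            · exact pow_le_one₀ (abs_nonneg _) (abs_sin_le_one α)
        _ = _ := by ring)
    (fun α => by
      refine ((hasSum_integral_exp_mul_cos (s * sin α)).mul_left (s * sin α)).congr_fun ?_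
      intro n
      rw [neg_pow (s * sin α), mul_pow]; ring)
  refine h.unique ?_
  -- the terms are `-(π/2)` times those of the series of `e^{-s}`, without its constant term
  have h2 := ((hasSum_nat_add_iff' 1).mpr (hasSum_exp_real (-s))).mul_left (-(π / 2))
  have hsum : π / 2 * (1 - exp (-s)) = -(π / 2) *
      (exp (-s) - ∑ i ∈ Finset.range 1, (-s) ^ i / (i.factorial : ℝ)) := by
    simp only [Finset.sum_range_one, pow_zero, Nat.factorial_zero, Nat.cast_one]
    ring
  rw [hsum]
  refine h2.congr_fun fun n => ?_
  rw [intervalIntegral.integral_const_mul]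
  change _ * wallis (n + 1) = _
  rw [← wallis_mul_succ n, neg_pow s, Nat.factorial_succ]
  push_cast
  field_simp
  ring

lemma integral_struveKernel_sin (s : ℝ) :
    ∫ α in (0 : ℝ)..(π / 2), struveKernel (s * sin α) = exp (-s) := by
  have hcont : Continuous fun x : ℝ => ∫ θ in (0 : ℝ)..(π / 2), exp (-x * cos θ) :=
    intervalIntegral.continuous_parametric_intervalIntegral_of_continuous' (by fun_prop) _ _
  have hcont' : Continuous fun α : ℝ =>
      (s * sin α) * ∫ θ in (0 : ℝ)..(π / 2), exp (-(s * sin α) * cos θ) :=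
    (by fun_prop : Continuous fun α : ℝ => s * sin α).mul
      (hcont.comp (by fun_prop : Continuous fun α : ℝ => s * sin α))
  have h : ∀ α, struveKernel (s * sin α) = 2 / π - 2 / π *
      ((s * sin α) * ∫ θ in (0 : ℝ)..(π / 2), exp (-(s * sin α) * cos θ)) := by
    intro α; unfold struveKernel; ring
  simp_rw [h]
  rw [intervalIntegral.integral_sub intervalIntegrable_const
    ((hcont'.const_mul _).intervalIntegrable _ _), intervalIntegral.integral_const_mul,
    integral_sin_mul_integral_exp, intervalIntegral.integral_const]
  simp only [smul_eq_mul]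
  field_simp
  ring

lemma ofReal_struveKernel (x : ℝ) :
    ((2 / π : ℝ) : ℂ) + (x : ℂ) * struveM (x : ℂ) = (struveKernel x : ℂ) := by
  unfold struveM struveKernel
  push_cast [← intervalIntegral.integral_ofReal]
  rfl

/-- The substitution `y = t sin α`. No integrability is needed: the change of variables on the open
interval is an identity of Bochner integrals. -/
lemma integral_div_sqrt_eq (g : ℝ → ℂ) {t : ℝ} (ht : 0 < t) :
    ∫ y in (0 : ℝ)..t, g y / ((sqrt (t ^ 2 - y ^ 2) : ℝ) : ℂ)
      = ∫ α in Set.Ioo 0 (π / 2), g (t * sin α) := by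
  have himg : (fun α => t * sin α) '' Set.Ioo 0 (π / 2) = Set.Ioo 0 t := by
    ext y
    constructor
    · rintro ⟨α, ⟨h0, h1⟩, rfl⟩
      have hs : 0 < sin α := sin_pos_of_pos_of_lt_pi h0 (by linarith [pi_pos])
      have hs1 : sin α < 1 := by
        rw [← sin_pi_div_two]
        exact sin_lt_sin_of_lt_of_le_pi_div_two (by linarith [pi_pos]) le_rfl h1
      exact ⟨by positivity, by nlinarith⟩
    · rintro ⟨h0, h1⟩
      have h1' : y / t < 1 := (div_lt_one ht).mpr h1
      have h0' : 0 < y / t := by positivity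
      refine ⟨arcsin (y / t), ⟨arcsin_pos.mpr h0', arcsin_lt_pi_div_two.mpr h1'⟩, ?_⟩
      change t * sin (arcsin (y / t)) = y
      rw [sin_arcsin (by linarith) h1'.le]
      field_simp
  have hinj : Set.InjOn (fun α => t * sin α) (Set.Ioo 0 (π / 2)) := by
    intro x hx y hy hxy
    have hxy' : sin x = sin y := mul_left_cancel₀ ht.ne' hxy
    exact injOn_sin ⟨by linarith [hx.1, pi_pos], hx.2.le⟩ ⟨by linarith [hy.1, pi_pos], hy.2.le⟩ hxy'
  rw [intervalIntegral.integral_of_le ht.le, integral_Ioc_eq_integral_Ioo, ← himg,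
    integral_image_eq_integral_abs_deriv_smul measurableSet_Ioo
      (fun α _ => ((hasDerivAt_sin α).const_mul t).hasDerivWithinAt) hinj]
  refine setIntegral_congr_fun measurableSet_Ioo fun α hα => ?_
  have hc : 0 < t * cos α :=
    mul_pos ht (cos_pos_of_mem_Ioo ⟨by linarith [hα.1, pi_pos], hα.2⟩)
  have hsq : t ^ 2 - (t * sin α) ^ 2 = (t * cos α) ^ 2 := by
    rw [mul_pow, mul_pow, cos_sq']; ring
  have hc' : ((t * cos α : ℝ) : ℂ) ≠ 0 := by exact_mod_cast hc.ne'
  simp only [hsq, sqrt_sq hc.le, abs_of_pos hc, Complex.real_smul]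
  field_simp

/-- `∫₀^t f(y)/(t² − y²)^{1/2} dy = ∫_{−π}^{π} e^{−t cosh u} φ(u) du` for the
function `f` of Theorem 2. -/
theorem integral_f_sqrt_Ioc
    (C : ℝ) (hC : 0 < C) (ψ : ℝ → ℂ)
    (hper : ∀ u : ℝ, ψ (u + 2 * π) = ψ u)
    (hlip : ∀ u ∈ Set.Icc (-π) π, ∀ v ∈ Set.Icc (-π) π, ‖ψ u - ψ v‖ ≤ C * |u - v|)
    (φ : ℝ → ℂ) (hφ : ∀ u : ℝ, φ u = ψ u * Real.sinh u)
    (f : ℝ → ℂ)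
    (hf : ∀ x : ℝ, 0 < x → f x = ∫ u in (-π)..π,
      φ u * (((2 / π : ℝ) : ℂ) +
        ((x * Real.cosh u : ℝ) : ℂ) * struveM ((x * Real.cosh u : ℝ) : ℂ))) :
    ∀ t : ℝ, 0 < t →
      ∫ y in (0 : ℝ)..t, f y / ((Real.sqrt (t ^ 2 - y ^ 2) : ℝ) : ℂ) =
        ∫ u in (-π)..π, ((Real.exp (-(t * Real.cosh u)) : ℝ) : ℂ) * φ u := by
  intro t ht
  have hψc : ContinuousOn ψ (Set.Icc (-π) π) := by
    have : LipschitzOnWith ⟨C, hC.le⟩ ψ (Set.Icc (-π) π) :=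
      LipschitzOnWith.of_dist_le_mul fun u hu v hv => by
        rw [dist_eq_norm, dist_eq_norm]
        exact hlip u hu v hv
    exact this.continuousOn
  have hφc : ContinuousOn φ (Set.Icc (-π) π) := by
    have : φ = fun u => ψ u * (Real.sinh u : ℂ) := funext hφ
    rw [this]
    exact hψc.mul (Complex.continuous_ofReal.comp continuous_sinh).continuousOn
  have hpi : -π ≤ π := by linarith [pi_pos]
  have hpi2 : 0 ≤ π / 2 := by positivity
  have hinteg : IntegrableOn
      (Function.uncurry fun α u : ℝ => φ u * (struveKernel (t * cosh u * sin α) : ℂ))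
      (Set.Icc 0 (π / 2) ×ˢ Set.Icc (-π) π) := by
    refine ContinuousOn.integrableOn_compact (isCompact_Icc.prod isCompact_Icc) ?_
    refine (hφc.comp continuousOn_snd fun p hp => hp.2).mul (Continuous.continuousOn ?_)
    exact Complex.continuous_ofReal.comp (continuous_struveKernel.comp (by fun_prop))
  calc ∫ y in (0 : ℝ)..t, f y / ((Real.sqrt (t ^ 2 - y ^ 2) : ℝ) : ℂ)
      = ∫ α in Set.Ioo 0 (π / 2), f (t * sin α) := integral_div_sqrt_eq f ht
    _ = ∫ α in Set.Ioo 0 (π / 2), ∫ u in (-π)..π,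
          φ u * (struveKernel (t * cosh u * sin α) : ℂ) := by
        refine setIntegral_congr_fun measurableSet_Ioo fun α hα => ?_
        have hs : 0 < sin α := sin_pos_of_pos_of_lt_pi hα.1 (by linarith [hα.2, pi_pos])
        simp only [hf _ (mul_pos ht hs), ofReal_struveKernel, mul_right_comm t (sin α)]
    _ = ∫ α in (0 : ℝ)..(π / 2), ∫ u in (-π)..π,
          φ u * (struveKernel (t * cosh u * sin α) : ℂ) := by
        rw [intervalIntegral.integral_of_le hpi2, integral_Ioc_eq_integral_Ioo]
    _ = ∫ u in (-π)..π, ∫ α in (0 : ℝ)..(π / 2),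
          φ u * (struveKernel (t * cosh u * sin α) : ℂ) := by
        simp_rw [intervalIntegral.integral_of_le hpi, intervalIntegral.integral_of_le hpi2]
        refine integral_integral_swap ?_
        rw [Measure.prod_restrict]
        exact hinteg.mono_set (Set.prod_mono Set.Ioc_subset_Icc_self Set.Ioc_subset_Icc_self)
    _ = ∫ u in (-π)..π, ((Real.exp (-(t * Real.cosh u)) : ℝ) : ℂ) * φ u := by
        refine intervalIntegral.integral_congr fun u _ => ?_
        simp only [intervalIntegral.integral_const_mul, intervalIntegral.integral_ofReal,
          integral_struveKernel_sin]
        exact mul_comm _ _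
end

section
/- Let ψ : ℝ → ℂ be a 2π-periodic function satisfying the Lipschitz condition |ψ(u) − ψ(v)| ≤ C|u − v| for all u, v ∈ [−π, π], let φ(u) = ψ(u) sinh(u), and let f(x) = (2x/π) ∫_{−π}^{π} K₀(x cosh u) φ(u) cosh(u) du for x > 0. Then for every n ∈ ℕ, the transform aₙ = ∫₀^∞ (∫₀^y K_{in}(t)/(y² − t²)^{1/2} dt) f(y) dy satisfies aₙ = (π/ sinh(πn)) ∫_{−π}^{π} φ(u) sin(nu)/ sinh(u) du. -/
/-!
Inserting the definition of `f` and exchanging integrals gives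
`aₙ = ∫ (2/π) φ(u) cosh u (∫₀^∞ Lₙ(y) y K₀(y cosh u) dy) du`, where `Lₙ` is the Lebedev kernel, so
it suffices to evaluate the inner integral for `c = cosh u`. A further exchange, over `0 < t < y`,
splits this evaluation into two classical integrals.

* `∫_t^∞ y K₀(c y) / √(y² - t²) dy = (π / 2c) e^{-ct}` (`lintegral_abel_besselKi`). With
  `y = √(t² + s²)` and the integral representation of `K₀` this becomes a double integral over a
  quadrant, evaluated in the coordinates `(s, k)` with `k` the tangent of the polar angle. It is
  proved for Lebesgue integrals of nonnegative functions, so that it also supplies the absolute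
  convergence that all exchanges need.

* `∫₀^∞ K_{iτ}(t) e^{-t cosh u} dt = ∫₀^∞ cos(τ v) / (cosh u + cosh v) dv
  = π sin(τ u) / (sinh u sinh(π τ))` (`integral_besselKi_mul_exp` and
  `integral_cos_mul_inv_cosh_add_cosh`). Since
  `2 sinh u / (cosh u + cosh v) = ∫_{-u}^{u} dq / (1 + cosh (v + q))`, it follows from the Fourier
  transform of `1 / (1 + cosh v)`, which is the Beta integral `2 B(1 + iτ, 1 - iτ)`.
-/

open MeasureTheory Real

/-- The modified Bessel function of the second kind of purely imaginary order `iτ`,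
`K_{iτ}(x) = ∫₀^∞ e^{−x cosh u} cos(τu) du` (real-valued). -/
noncomputable def besselKi (τ x : ℝ) : ℝ :=
  ∫ u in Set.Ioi (0 : ℝ), Real.exp (-x * Real.cosh u) * Real.cos (τ * u)

/-- The Lebedev kernel `Lₙ(y) = ∫₀^y K_{in}(t)/(y² − t²)^{1/2} dt`. -/
noncomputable def lebedevL (n : ℕ) (y : ℝ) : ℝ :=
  ∫ t in (0 : ℝ)..y, besselKi n t / Real.sqrt (y ^ 2 - t ^ 2)

/-! ### The integral of `K₀` against the Abel kernel -/

theorem integrableOn_exp_cosh {x : ℝ} (hx : 0 < x) :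
    IntegrableOn (fun v => Real.exp (-x * Real.cosh v)) (Set.Ioi 0) := by
  refine (exp_neg_integrableOn_Ioi 0 hx).mono' (by fun_prop) ?_
  filter_upwards [ae_restrict_mem measurableSet_Ioi] with v hv
  rw [Real.norm_of_nonneg (Real.exp_pos _).le]
  have h1 := Real.self_le_sinh_iff.2 (le_of_lt hv)
  have h2 := Real.sinh_lt_cosh v
  exact Real.exp_le_exp.2 (by nlinarith)

theorem measurable_besselKi (τ : ℝ) : Measurable (besselKi τ) := by
  have : StronglyMeasurable (fun x => ∫ u in Set.Ioi (0 : ℝ),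
      Real.exp (-x * Real.cosh u) * Real.cos (τ * u)) := by
    refine StronglyMeasurable.integral_prod_right (f := fun x u : ℝ =>
      Real.exp (-x * Real.cosh u) * Real.cos (τ * u)) ?_
    apply Measurable.stronglyMeasurable
    unfold Function.uncurry
    fun_prop
  exact this.measurable

theorem besselKi_zero_nonneg (x : ℝ) : 0 ≤ besselKi 0 x := by
  unfold besselKi
  simp only [zero_mul, Real.cos_zero, mul_one]
  exact integral_nonneg fun v => (Real.exp_pos _).le

theorem ofReal_besselKi_zero {x : ℝ} (hx : 0 < x) :
    ENNReal.ofReal (besselKi 0 x) =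
      ∫⁻ v in Set.Ioi (0 : ℝ), ENNReal.ofReal (Real.exp (-x * Real.cosh v)) := by
  unfold besselKi
  simp only [zero_mul, Real.cos_zero, mul_one]
  exact ofReal_integral_eq_lintegral_ofReal (integrableOn_exp_cosh hx)
    (ae_of_all _ fun v => (Real.exp_pos _).le)

/-- The substitution `s k = √(t² + s²) sinh w`, which turns `√(t² + s²) cosh w` into
`√(t² + s² (1 + k²))`. The variable `k` plays the role of the tangent of a polar angle. -/
theorem lintegral_exp_cosh_subst {c t s : ℝ} (ht : 0 < t) (hs : 0 < s) :
    ∫⁻ w in Set.Ioi (0 : ℝ), ENNReal.ofReal (Real.exp (-(c * √(t ^ 2 + s ^ 2)) * Real.cosh w)) =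
      ∫⁻ k in Set.Ioi (0 : ℝ), ENNReal.ofReal
        (Real.exp (-c * √(t ^ 2 + s ^ 2 * (1 + k ^ 2))) * s / √(t ^ 2 + s ^ 2 * (1 + k ^ 2))) := by
  set r := √(t ^ 2 + s ^ 2) with hr
  have hr0 : 0 < r := by positivity
  have hr2 : r ^ 2 = t ^ 2 + s ^ 2 := Real.sq_sqrt (by positivity)
  have himg : (fun w => r / s * Real.sinh w) '' Set.Ioi 0 = Set.Ioi 0 := by
    ext k
    constructor
    · rintro ⟨w, hw, rfl⟩
      have := Real.sinh_pos_iff.2 hw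
      simp only [Set.mem_Ioi]; positivity
    · intro hk
      refine ⟨Real.arsinh (k * s / r), ?_, ?_⟩
      · simp only [Set.mem_Ioi] at *
        rw [Real.arsinh_pos_iff]; positivity
      · simp only [Real.sinh_arsinh]; field_simp
  conv_rhs => rw [← himg]
  rw [lintegral_image_eq_lintegral_abs_deriv_mul measurableSet_Ioi
    (f' := fun w => r / s * Real.cosh w)]
  · refine setLIntegral_congr_fun measurableSet_Ioi fun w hw => ?_
    have hc := Real.cosh_pos w
    have h1 : √(t ^ 2 + s ^ 2 * (1 + (r / s * Real.sinh w) ^ 2)) = r * Real.cosh w := by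
      rw [Real.sqrt_eq_iff_mul_self_eq (by positivity) (by positivity)]
      rw [Real.sinh_eq] at *
      have := Real.cosh_sq w
      rw [Real.sinh_eq] at this
      field_simp
      rw [this]
      field_simp
      nlinarith
    rw [h1, ← ENNReal.ofReal_mul (abs_nonneg _), abs_of_pos (by positivity)]
    congr 1
    rw [show -(c * r) * Real.cosh w = -c * (r * Real.cosh w) by ring]
    field_simp
  · intro w _
    exact ((Real.hasDerivAt_sinh w).const_mul _).hasDerivWithinAt
  · intro a _ b _ h
    have : r / s ≠ 0 := by positivity
    exact Real.sinh_injective (mul_left_cancel₀ this h)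

/-- The integrand is the exact derivative in `s` of
`-exp (-c √(t² + s² (1 + k²))) / (c (1 + k²))`. -/
theorem lintegral_radial {c t k : ℝ} (hc : 0 < c) (ht : 0 < t) :
    ∫⁻ s in Set.Ioi (0 : ℝ), ENNReal.ofReal
        (Real.exp (-c * √(t ^ 2 + s ^ 2 * (1 + k ^ 2))) * s / √(t ^ 2 + s ^ 2 * (1 + k ^ 2))) =
      ENNReal.ofReal (Real.exp (-c * t) / c * (1 + k ^ 2)⁻¹) := by
  set F : ℝ → ℝ := fun s => - (Real.exp (-c * √(t ^ 2 + s ^ 2 * (1 + k ^ 2))) / c * (1 + k ^ 2)⁻¹)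
    with hF
  have hd : ∀ s : ℝ, HasDerivAt F
      (Real.exp (-c * √(t ^ 2 + s ^ 2 * (1 + k ^ 2))) * s / √(t ^ 2 + s ^ 2 * (1 + k ^ 2))) s := by
    intro s
    have hpos : 0 < t ^ 2 + s ^ 2 * (1 + k ^ 2) := by positivity
    have h1 : HasDerivAt (fun s : ℝ => t ^ 2 + s ^ 2 * (1 + k ^ 2)) (2 * s * (1 + k ^ 2)) s := by
      simpa using (((hasDerivAt_pow 2 s).mul_const (1 + k ^ 2)).const_add (t ^ 2))
    have h2 := ((((h1.sqrt hpos.ne').const_mul (-c)).exp.div_const c).mul_const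
      (1 + k ^ 2)⁻¹).neg
    refine h2.congr_deriv ?_
    have : 0 < √(t ^ 2 + s ^ 2 * (1 + k ^ 2)) := by positivity
    have : 0 < 1 + k ^ 2 := by positivity
    field_simp
  have hlim : Filter.Tendsto F Filter.atTop (nhds 0) := by
    have h0 : Filter.Tendsto (fun s : ℝ => c * s) Filter.atTop Filter.atTop :=
      Filter.tendsto_id.const_mul_atTop hc
    have h1 : Filter.Tendsto (fun s : ℝ => c * √(t ^ 2 + s ^ 2 * (1 + k ^ 2)))
        Filter.atTop Filter.atTop := by
      refine Filter.tendsto_atTop_mono' _ ?_ h0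
      filter_upwards [Filter.eventually_ge_atTop 0] with s hs
      gcongr
      apply Real.le_sqrt_of_sq_le
      nlinarith [sq_nonneg t, sq_nonneg (s * k)]
    have h2 := Real.tendsto_exp_neg_atTop_nhds_zero.comp h1
    have h3 := ((h2.div_const c).mul_const (1 + k ^ 2)⁻¹).neg
    simpa [hF, Function.comp_def] using h3
  have hnn : ∀ s ∈ Set.Ioi (0 : ℝ), 0 ≤
      Real.exp (-c * √(t ^ 2 + s ^ 2 * (1 + k ^ 2))) * s / √(t ^ 2 + s ^ 2 * (1 + k ^ 2)) := by
    intro s hs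
    have : (0 : ℝ) ≤ s := le_of_lt hs
    positivity
  have hcont := (hd 0).continuousAt.continuousWithinAt (s := Set.Ici 0)
  rw [← ofReal_integral_eq_lintegral_ofReal
    (integrableOn_Ioi_deriv_of_nonneg hcont (fun s _ => hd s) hnn hlim)
    ((ae_restrict_iff' measurableSet_Ioi).2 (ae_of_all _ hnn)),
    integral_Ioi_of_hasDerivAt_of_nonneg hcont (fun s _ => hd s) hnn hlim]
  congr 1
  simp [hF, Real.sqrt_sq ht.le]

theorem lintegral_inv_one_add_sq :
    ∫⁻ k in Set.Ioi (0 : ℝ), ENNReal.ofReal ((1 + k ^ 2)⁻¹) = ENNReal.ofReal (π / 2) := by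
  rw [← ofReal_integral_eq_lintegral_ofReal integrable_inv_one_add_sq.integrableOn
    (ae_of_all _ fun k => by positivity)]
  simp

/-- The Abel-type integral `∫_t^∞ y K₀(c y) / √(y² - t²) dy = (π / 2c) e^{-ct}`. -/
theorem lintegral_abel_besselKi {c t : ℝ} (hc : 0 < c) (ht : 0 < t) :
    ∫⁻ y in Set.Ioi t, ENNReal.ofReal (y / √(y ^ 2 - t ^ 2) * besselKi 0 (y * c)) =
      ENNReal.ofReal (π / (2 * c) * Real.exp (-c * t)) := by
  have himg : (fun s => √(t ^ 2 + s ^ 2)) '' Set.Ioi 0 = Set.Ioi t := by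
    ext y
    constructor
    · rintro ⟨s, hs, rfl⟩
      simp only [Set.mem_Ioi] at *
      apply Real.lt_sqrt_of_sq_lt
      nlinarith
    · intro hy
      simp only [Set.mem_Ioi] at *
      refine ⟨√(y ^ 2 - t ^ 2), ?_, ?_⟩
      · simp only [Set.mem_Ioi]
        apply Real.sqrt_pos.2
        nlinarith
      · simp only []
        rw [Real.sq_sqrt (by nlinarith)]
        rw [show t ^ 2 + (y ^ 2 - t ^ 2) = y ^ 2 by ring, Real.sqrt_sq (by linarith)]
  rw [← himg, lintegral_image_eq_lintegral_abs_deriv_mul measurableSet_Ioi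
    (f' := fun s => s / √(t ^ 2 + s ^ 2))]
  rotate_left
  · intro s _
    have hpos : 0 < t ^ 2 + s ^ 2 := by positivity
    have h1 : HasDerivAt (fun s : ℝ => t ^ 2 + s ^ 2) (2 * s) s := by
      simpa using ((hasDerivAt_pow 2 s).const_add (t ^ 2))
    refine ((h1.sqrt hpos.ne').congr_deriv ?_).hasDerivWithinAt
    field_simp
  · intro a ha b hb h
    simp only [Set.mem_Ioi] at *
    rw [Real.sqrt_inj (by positivity) (by positivity)] at h
    have : a ^ 2 = b ^ 2 := by linarith
    exact (pow_left_inj₀ ha.le hb.le two_ne_zero).1 this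
  have h1 : ∀ s ∈ Set.Ioi (0 : ℝ),
      ENNReal.ofReal |s / √(t ^ 2 + s ^ 2)| * ENNReal.ofReal (√(t ^ 2 + s ^ 2) /
        √(√(t ^ 2 + s ^ 2) ^ 2 - t ^ 2) * besselKi 0 (√(t ^ 2 + s ^ 2) * c)) =
      ∫⁻ k in Set.Ioi (0 : ℝ), ENNReal.ofReal
        (Real.exp (-c * √(t ^ 2 + s ^ 2 * (1 + k ^ 2))) * s /
          √(t ^ 2 + s ^ 2 * (1 + k ^ 2))) := by
    intro s hs
    simp only [Set.mem_Ioi] at hs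
    have hr : 0 < √(t ^ 2 + s ^ 2) := by positivity
    rw [← lintegral_exp_cosh_subst ht hs, ← ofReal_besselKi_zero (by positivity),
      ← ENNReal.ofReal_mul (abs_nonneg _), abs_of_pos (by positivity),
      Real.sq_sqrt (by positivity), add_sub_cancel_left, Real.sqrt_sq hs.le,
      mul_comm c]
    congr 1
    field_simp
  rw [setLIntegral_congr_fun measurableSet_Ioi h1, lintegral_lintegral_swap]
  · simp_rw [lintegral_radial hc ht]
    have h2 : ∀ k : ℝ, ENNReal.ofReal (Real.exp (-c * t) / c * (1 + k ^ 2)⁻¹) =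
        ENNReal.ofReal (Real.exp (-c * t) / c) * ENNReal.ofReal ((1 + k ^ 2)⁻¹) := fun k =>
      ENNReal.ofReal_mul (by positivity)
    simp_rw [h2]
    rw [lintegral_const_mul _ (by fun_prop), lintegral_inv_one_add_sq,
      ← ENNReal.ofReal_mul (by positivity)]
    congr 1
    field_simp
  · unfold Function.uncurry
    fun_prop

/-! ### The cosine transform of `1 / (cosh u + cosh v)` -/

theorem hasDerivAt_sinh_div_one_add_cosh (v : ℝ) :
    HasDerivAt (fun v => Real.sinh v / (1 + Real.cosh v)) ((1 + Real.cosh v)⁻¹) v := by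
  have hc := Real.cosh_pos v
  refine ((Real.hasDerivAt_sinh v).div ((Real.hasDerivAt_cosh v).const_add 1)
    (by positivity)).congr_deriv ?_
  have := Real.cosh_sq v
  field_simp
  linarith

theorem integrableOn_inv_add_cosh {c : ℝ} (hc : 0 ≤ c) :
    IntegrableOn (fun v => (c + Real.cosh v)⁻¹) (Set.Ioi 0) := by
  refine ((exp_neg_integrableOn_Ioi 0 one_pos).const_mul 2).mono' ?_ ?_
  · apply Measurable.aestronglyMeasurable; fun_prop
  filter_upwards [ae_restrict_mem measurableSet_Ioi] with v hv
  have h0 := Real.cosh_pos v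
  rw [Real.norm_of_nonneg (by positivity)]
  rw [inv_le_iff_one_le_mul₀ (by positivity), Real.cosh_eq]
  have h1 : Real.exp (-1 * v) * Real.exp v = 1 := by rw [← Real.exp_add]; simp
  have h2 := Real.exp_pos (-1 * v)
  have h3 := Real.exp_pos (-v)
  nlinarith [mul_nonneg h2.le hc, mul_pos h2 h3]

theorem integrable_inv_one_add_cosh :
    Integrable (fun v : ℝ => (1 + Real.cosh v)⁻¹) := by
  refine (integrable_inv_one_add_sq.const_mul 2).mono'
    (Measurable.aestronglyMeasurable (by fun_prop)) (ae_of_all _ fun v => ?_)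
  have h0 := Real.cosh_pos v
  rw [Real.norm_of_nonneg (by positivity)]
  -- `cosh v = 1 + 2 sinh² (v/2) ≥ 1 + v² / 2`
  have h1 := Real.cosh_two_mul (v / 2)
  have h2 := Real.cosh_sq (v / 2)
  have h3 : (v / 2) ^ 2 ≤ Real.sinh (v / 2) ^ 2 := by
    rw [sq_le_sq, Real.abs_sinh]
    exact Real.self_le_sinh_iff.2 (abs_nonneg _)
  rw [mul_div_cancel₀ v two_ne_zero] at h1
  rw [← div_eq_mul_inv, inv_eq_one_div, div_le_div_iff₀ (by positivity) (by positivity)]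
  nlinarith [sq_nonneg v]

/-- The Fourier transform of `1 / (1 + cosh v)`. The logistic substitution `p = 1 / (1 + e^{-v})`
identifies it with `2 B(1 + iτ, 1 - iτ)`, which the reflection formula for `Γ` evaluates. -/
theorem integral_exp_mul_inv_one_add_cosh {τ : ℝ} (hτ : 0 < τ) :
    ∫ v : ℝ, Complex.exp (Complex.I * τ * v) * ((1 + Real.cosh v)⁻¹ : ℝ) =
      ((2 * π * τ / Real.sinh (π * τ) : ℝ) : ℂ) := by
  have hbeta : Complex.betaIntegral (1 + Complex.I * τ) (1 - Complex.I * τ) =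
      ((π * τ / Real.sinh (π * τ) : ℝ) : ℂ) := by
    have h1 := Complex.Gamma_mul_Gamma_eq_betaIntegral (s := 1 + Complex.I * τ)
      (t := 1 - Complex.I * τ) (by simp) (by simp)
    rw [show (1 + Complex.I * τ) + (1 - Complex.I * τ) = (2 : ℂ) by ring] at h1
    have h2 : Complex.Gamma 2 = 1 := by
      simp
    rw [h2, one_mul] at h1
    have hI : Complex.I * τ ≠ 0 := by
      simp [hτ.ne']
    rw [← h1, add_comm, Complex.Gamma_add_one _ hI, mul_assoc, Complex.Gamma_mul_Gamma_one_sub,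
      show (π : ℂ) * (Complex.I * τ) = (π * τ : ℂ) * Complex.I by ring, Complex.sin_mul_I]
    push_cast
    field_simp
  have hsub := integral_image_eq_integral_abs_deriv_smul (s := Set.univ) (f := Real.sigmoid)
    (f' := fun x => Real.sigmoid x * (1 - Real.sigmoid x)) MeasurableSet.univ
    (fun x _ => (Real.hasDerivAt_sigmoid x).hasDerivWithinAt) Real.sigmoid_injective.injOn
    (fun p : ℝ => (p : ℂ) ^ (Complex.I * τ) * (1 - (p : ℂ)) ^ (-(Complex.I * τ)))
  rw [Set.image_univ, Real.range_sigmoid, ← integral_Ioc_eq_integral_Ioo,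
    ← intervalIntegral.integral_of_le zero_le_one, setIntegral_univ] at hsub
  have hb : Complex.betaIntegral (1 + Complex.I * τ) (1 - Complex.I * τ) =
      ∫ p in (0 : ℝ)..1, (p : ℂ) ^ (Complex.I * τ) * (1 - (p : ℂ)) ^ (-(Complex.I * τ)) := by
    unfold Complex.betaIntegral
    simp
  rw [← hb, hbeta] at hsub
  have hpt : ∀ v : ℝ, Complex.exp (Complex.I * τ * v) * ((1 + Real.cosh v)⁻¹ : ℝ) =
      2 * (|Real.sigmoid v * (1 - Real.sigmoid v)| •
        ((Real.sigmoid v : ℂ) ^ (Complex.I * τ) *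
          (1 - (Real.sigmoid v : ℂ)) ^ (-(Complex.I * τ)))) := by
    intro v
    have hs0 := Real.sigmoid_pos v
    have hs1 := Real.sigmoid_pos (-v)
    have hrel := Real.sigmoid_mul_rexp_neg v
    have hneg := Real.sigmoid_neg v
    rw [← Complex.ofReal_one, ← Complex.ofReal_sub, ← hneg, abs_of_pos (by positivity),
      Complex.cpow_def_of_ne_zero (by exact_mod_cast hs0.ne'),
      Complex.cpow_def_of_ne_zero (by exact_mod_cast hs1.ne'), ← Complex.exp_add,
      ← Complex.ofReal_log hs0.le, ← Complex.ofReal_log hs1.le]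
    have hlog : Real.log (Real.sigmoid (-v)) = Real.log (Real.sigmoid v) - v := by
      rw [← hrel, Real.log_mul hs0.ne' (Real.exp_pos _).ne', Real.log_exp]; ring
    have hval : (1 + Real.cosh v)⁻¹ = 2 * (Real.sigmoid v * Real.sigmoid (-v)) := by
      have he := Real.exp_pos v
      simp only [Real.sigmoid_def, Real.cosh_eq, neg_neg, Real.exp_neg]
      field_simp
      ring
    rw [hlog, hval, Complex.real_smul]
    push_cast
    rw [mul_comm, mul_assoc]
    congr 3
    ring
  simp_rw [hpt]
  rw [integral_const_mul, ← hsub]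
  push_cast
  ring

theorem integral_cos_mul_shift {τ : ℝ} (hτ : 0 < τ) (q : ℝ) :
    ∫ v : ℝ, Real.cos (τ * v) * (1 + Real.cosh (v + q))⁻¹ =
      Real.cos (τ * q) * (2 * π * τ / Real.sinh (π * τ)) := by
  have h1 : ∫ v : ℝ, Complex.exp (Complex.I * τ * v) * ((1 + Real.cosh (v + q))⁻¹ : ℝ) =
      Complex.exp (Complex.I * τ * (-q : ℝ)) * ((2 * π * τ / Real.sinh (π * τ) : ℝ) : ℂ) := by
    rw [← integral_exp_mul_inv_one_add_cosh hτ, ← integral_const_mul,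
      ← integral_add_right_eq_self (fun v : ℝ => Complex.exp (Complex.I * τ * (-q : ℝ)) *
        (Complex.exp (Complex.I * τ * v) * ((1 + Real.cosh v)⁻¹ : ℝ))) q]
    congr 1
    ext v
    rw [← mul_assoc, ← Complex.exp_add]
    congr 2
    push_cast
    ring
  have hre : ∀ x r : ℝ, (Complex.exp (Complex.I * τ * x) * (r : ℂ)).re = Real.cos (τ * x) * r := by
    intro x r
    rw [Complex.re_mul_ofReal, show Complex.I * τ * x = ((τ * x : ℝ) : ℂ) * Complex.I by
      push_cast; ring, Complex.exp_ofReal_mul_I_re]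
  have hint : Integrable (fun v : ℝ =>
      Complex.exp (Complex.I * τ * v) * ((1 + Real.cosh (v + q))⁻¹ : ℝ)) := by
    refine (integrable_inv_one_add_cosh.comp_add_right q).mono'
      (Measurable.aestronglyMeasurable (by fun_prop)) (ae_of_all _ fun v => ?_)
    rw [norm_mul, show Complex.I * τ * v = ((τ * v : ℝ) : ℂ) * Complex.I by push_cast; ring,
      Complex.norm_exp_ofReal_mul_I, one_mul, Complex.norm_real]
    have := Real.cosh_pos (v + q)
    exact (Real.norm_of_nonneg (by positivity)).le
  have h2 := congrArg Complex.re h1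
  rw [hre, mul_neg, Real.cos_neg] at h2
  rw [← h2]
  refine Eq.trans ?_ (integral_re hint)
  congr 1
  ext v
  exact (hre v _).symm

theorem sinh_div_sub (u v : ℝ) :
    Real.sinh (v + u) / (1 + Real.cosh (v + u)) - Real.sinh (v + -u) / (1 + Real.cosh (v + -u)) =
      2 * Real.sinh u * (Real.cosh u + Real.cosh v)⁻¹ := by
  have key : ∀ z : ℝ, Real.sinh z / (1 + Real.cosh z) = (Real.exp z - 1) / (Real.exp z + 1) := by
    intro z
    have := Real.exp_pos z
    rw [Real.sinh_eq, Real.cosh_eq, Real.exp_neg]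
    field_simp
    ring
  rw [key, key, Real.exp_add, Real.exp_add, Real.sinh_eq, Real.cosh_eq, Real.cosh_eq,
    Real.exp_neg, Real.exp_neg]
  have h1 := Real.exp_pos u
  have h2 := Real.exp_pos v
  field_simp
  ring

theorem integral_inv_one_add_cosh_interval (u v : ℝ) :
    ∫ q in (-u)..u, (1 + Real.cosh (v + q))⁻¹ =
      2 * Real.sinh u * (Real.cosh u + Real.cosh v)⁻¹ := by
  rw [← sinh_div_sub]
  have hcont : Continuous fun q : ℝ => (1 + Real.cosh (v + q))⁻¹ := by
    refine Continuous.inv₀ (by fun_prop) fun q => ?_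
    have := Real.cosh_pos (v + q)
    positivity
  refine intervalIntegral.integral_eq_sub_of_hasDerivAt
    (f := fun q => Real.sinh (v + q) / (1 + Real.cosh (v + q))) (fun q _ => ?_)
    (hcont.intervalIntegrable _ _)
  exact (hasDerivAt_sinh_div_one_add_cosh (v + q)).comp_const_add v q

/-- The cosine transform of `1 / (cosh u + cosh v)`, multiplied by `sinh u` so that `u = 0` is
covered. By `integral_inv_one_add_cosh_interval` the integrand is an average over
`q ∈ [-u, u]` of translates of `1 / (1 + cosh v)`, whose transforms are known. -/
theorem integral_cos_mul_inv_cosh_add_cosh {τ : ℝ} (hτ : 0 < τ) (u : ℝ) :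
    Real.sinh u * ∫ v in Set.Ioi (0 : ℝ), Real.cos (τ * v) * (Real.cosh u + Real.cosh v)⁻¹ =
      π * Real.sin (τ * u) / Real.sinh (π * τ) := by
  have hsw : ∫ q in (-u)..u, ∫ v : ℝ, Real.cos (τ * v) * (1 + Real.cosh (v + q))⁻¹ =
      ∫ v : ℝ, ∫ q in (-u)..u, Real.cos (τ * v) * (1 + Real.cosh (v + q))⁻¹ := by
    refine intervalIntegral_integral_swap ?_
    have hmeas : AEStronglyMeasurable (Function.uncurry fun q v : ℝ =>
        Real.cos (τ * v) * (1 + Real.cosh (v + q))⁻¹)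
        ((volume.restrict (Set.uIoc (-u) u)).prod volume) := by
      apply Measurable.aestronglyMeasurable
      unfold Function.uncurry
      fun_prop
    have hI : ∀ q : ℝ, Integrable fun v : ℝ => (1 + Real.cosh (v + q))⁻¹ :=
      fun q => integrable_inv_one_add_cosh.comp_add_right q
    have hle : ∀ q v : ℝ, ‖Real.cos (τ * v) * (1 + Real.cosh (v + q))⁻¹‖ ≤
        (1 + Real.cosh (v + q))⁻¹ := by
      intro q v
      have := Real.cosh_pos (v + q)
      rw [norm_mul, Real.norm_of_nonneg (r := (1 + Real.cosh (v + q))⁻¹) (by positivity)]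
      exact mul_le_of_le_one_left (by positivity) (Real.abs_cos_le_one _)
    have hI' : ∀ q : ℝ, Integrable fun v : ℝ => Real.cos (τ * v) * (1 + Real.cosh (v + q))⁻¹ :=
      fun q => (hI q).mono' (Measurable.aestronglyMeasurable (by fun_prop)) (ae_of_all _ (hle q))
    rw [integrable_prod_iff hmeas]
    refine ⟨ae_of_all _ hI', ?_⟩
    have : IsFiniteMeasure (volume.restrict (Set.uIoc (-u) u)) :=
      ⟨by simp [Set.uIoc]⟩
    refine (integrable_const (∫ v : ℝ, (1 + Real.cosh v)⁻¹)).mono'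
      hmeas.norm.integral_prod_right' (ae_of_all _ fun q => ?_)
    rw [Real.norm_of_nonneg (integral_nonneg fun v => norm_nonneg _)]
    calc _ ≤ ∫ v : ℝ, (1 + Real.cosh (v + q))⁻¹ := integral_mono (hI' q).norm (hI q) (hle q)
      _ = _ := integral_add_right_eq_self (fun v : ℝ => (1 + Real.cosh v)⁻¹) q
  simp_rw [integral_cos_mul_shift hτ, intervalIntegral.integral_const_mul,
    integral_inv_one_add_cosh_interval] at hsw
  rw [intervalIntegral.integral_mul_const,
    intervalIntegral.integral_comp_mul_left (fun x => Real.cos x) hτ.ne', integral_cos] at hsw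
  have heven : ∫ v : ℝ, Real.cos (τ * v) * (2 * Real.sinh u * (Real.cosh u + Real.cosh v)⁻¹) =
      2 * ∫ v in Set.Ioi (0 : ℝ),
        Real.cos (τ * v) * (2 * Real.sinh u * (Real.cosh u + Real.cosh v)⁻¹) := by
    rw [← integral_comp_abs
      (f := fun v => Real.cos (τ * v) * (2 * Real.sinh u * (Real.cosh u + Real.cosh v)⁻¹))]
    congr 1
    ext v
    rw [Real.cosh_abs, ← Real.cos_abs (τ * v), abs_mul, abs_of_pos hτ]
  rw [heven] at hsw
  have hpull : ∫ v in Set.Ioi (0 : ℝ),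
        Real.cos (τ * v) * (2 * Real.sinh u * (Real.cosh u + Real.cosh v)⁻¹) =
      2 * Real.sinh u * ∫ v in Set.Ioi (0 : ℝ),
        Real.cos (τ * v) * (Real.cosh u + Real.cosh v)⁻¹ := by
    rw [← integral_const_mul]
    congr 1
    ext v
    ring
  rw [hpull, mul_neg, Real.sin_neg] at hsw
  have hs : Real.sinh (π * τ) ≠ 0 := (Real.sinh_pos_iff.2 (by positivity)).ne'
  simp only [smul_eq_mul] at hsw
  field_simp at hsw ⊢
  linarith

/-! ### Exchange of integrals -/

/-- Absolute convergence of the double integral obtained by inserting the definition of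
`K_{iτ}` into its Laplace transform. -/
theorem integrable_laplace_kernel (τ : ℝ) {c : ℝ} (hc : 0 ≤ c) :
    Integrable (Function.uncurry fun t v : ℝ =>
        Real.exp (-t * Real.cosh v) * Real.cos (τ * v) * Real.exp (-c * t))
      ((volume.restrict (Set.Ioi 0)).prod (volume.restrict (Set.Ioi 0))) := by
  have hmeas : AEStronglyMeasurable (Function.uncurry fun t v : ℝ =>
        Real.exp (-t * Real.cosh v) * Real.cos (τ * v) * Real.exp (-c * t))
      ((volume.restrict (Set.Ioi 0)).prod (volume.restrict (Set.Ioi 0))) := by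
    apply Measurable.aestronglyMeasurable
    unfold Function.uncurry
    fun_prop
  have hpos : ∀ v : ℝ, 0 < c + Real.cosh v := fun v => by
    have := Real.cosh_pos v; positivity
  have hle : ∀ t v : ℝ, ‖Real.exp (-t * Real.cosh v) * Real.cos (τ * v) * Real.exp (-c * t)‖ ≤
      Real.exp (-(c + Real.cosh v) * t) := by
    intro t v
    rw [show -(c + Real.cosh v) * t = -t * Real.cosh v + -c * t by ring, Real.exp_add, norm_mul,
      norm_mul, Real.norm_of_nonneg (Real.exp_pos _).le, Real.norm_of_nonneg (Real.exp_pos _).le]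
    exact mul_le_mul_of_nonneg_right
      (mul_le_of_le_one_right (Real.exp_pos _).le (Real.abs_cos_le_one _)) (Real.exp_pos _).le
  have hI : ∀ v : ℝ, IntegrableOn (fun t : ℝ =>
      Real.exp (-t * Real.cosh v) * Real.cos (τ * v) * Real.exp (-c * t)) (Set.Ioi 0) := fun v =>
    (exp_neg_integrableOn_Ioi 0 (hpos v)).mono' (by fun_prop) (ae_of_all _ fun t => hle t v)
  rw [integrable_prod_iff' hmeas]
  refine ⟨ae_of_all _ hI, ?_⟩
  refine (integrableOn_inv_add_cosh hc).mono' hmeas.norm.prod_swap.integral_prod_right'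
    (ae_of_all _ fun v => ?_)
  rw [Real.norm_of_nonneg (integral_nonneg fun v => norm_nonneg _)]
  calc _ ≤ ∫ t in Set.Ioi (0 : ℝ), Real.exp (-(c + Real.cosh v) * t) :=
        integral_mono (hI v).norm (exp_neg_integrableOn_Ioi 0 (hpos v)) fun t => hle t v
    _ = _ := by
      rw [integral_exp_mul_Ioi (by linarith [hpos v])]
      rw [mul_zero, Real.exp_zero, neg_div_neg_eq, one_div]

theorem besselKi_mul_exp (τ c t : ℝ) :
    ∫ v in Set.Ioi (0 : ℝ), Real.exp (-t * Real.cosh v) * Real.cos (τ * v) * Real.exp (-c * t) =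
      besselKi τ t * Real.exp (-c * t) := by
  rw [integral_mul_const, besselKi]

theorem integrableOn_besselKi_mul_exp (τ : ℝ) {c : ℝ} (hc : 0 ≤ c) :
    IntegrableOn (fun t => besselKi τ t * Real.exp (-c * t)) (Set.Ioi 0) := by
  simpa only [IntegrableOn, Function.uncurry, besselKi_mul_exp] using
    (integrable_laplace_kernel τ hc).integral_prod_left

theorem integral_besselKi_mul_exp (τ : ℝ) {c : ℝ} (hc : 0 ≤ c) :
    ∫ t in Set.Ioi (0 : ℝ), besselKi τ t * Real.exp (-c * t) =
      ∫ v in Set.Ioi (0 : ℝ), Real.cos (τ * v) * (c + Real.cosh v)⁻¹ := by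
  have h := integral_integral_swap (integrable_laplace_kernel τ hc)
  simp_rw [besselKi_mul_exp] at h
  rw [h]
  congr 1
  ext v
  have hv := Real.cosh_pos v
  have h1 : ∀ t : ℝ, Real.exp (-t * Real.cosh v) * Real.cos (τ * v) * Real.exp (-c * t) =
      Real.cos (τ * v) * Real.exp (-(c + Real.cosh v) * t) := by
    intro t
    rw [show -(c + Real.cosh v) * t = -t * Real.cosh v + -c * t by ring, Real.exp_add]
    ring
  simp_rw [h1]
  rw [integral_const_mul, integral_exp_mul_Ioi (by linarith)]
  rw [mul_zero, Real.exp_zero, neg_div_neg_eq, one_div]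

theorem abel_nonneg {c t y : ℝ} (ht : 0 < t) (hy : y ∈ Set.Ioi t) :
    0 ≤ y / √(y ^ 2 - t ^ 2) * besselKi 0 (y * c) := by
  have : 0 < y := ht.trans hy
  have := besselKi_zero_nonneg (y * c)
  positivity

theorem integrableOn_abel_besselKi {c t : ℝ} (hc : 0 < c) (ht : 0 < t) :
    IntegrableOn (fun y => y / √(y ^ 2 - t ^ 2) * besselKi 0 (y * c)) (Set.Ioi t) := by
  have hm := measurable_besselKi 0
  rw [IntegrableOn, ← lintegral_ofReal_ne_top_iff_integrable
    (Measurable.aestronglyMeasurable (by fun_prop))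
    ((ae_restrict_iff' measurableSet_Ioi).2 (ae_of_all _ fun y hy => abel_nonneg ht hy)),
    lintegral_abel_besselKi hc ht]
  exact ENNReal.ofReal_ne_top

theorem integral_abel_besselKi {c t : ℝ} (hc : 0 < c) (ht : 0 < t) :
    ∫ y in Set.Ioi t, y / √(y ^ 2 - t ^ 2) * besselKi 0 (y * c) =
      π / (2 * c) * Real.exp (-c * t) := by
  have hm := measurable_besselKi 0
  rw [integral_eq_lintegral_of_nonneg_ae
    ((ae_restrict_iff' measurableSet_Ioi).2 (ae_of_all _ fun y hy => abel_nonneg ht hy))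
    (Measurable.aestronglyMeasurable (by fun_prop)), lintegral_abel_besselKi hc ht,
    ENNReal.toReal_ofReal (by positivity)]

/-- The integrand of the double integral expressing `∫₀^∞ L(y) y K₀(c y) dy`, where `L` is the
Lebedev kernel of order `τ`: it is set to zero outside `t < y`, so that both variables range over
`(0, ∞)`. -/
noncomputable def abelKernel (τ c y t : ℝ) : ℝ :=
  (Set.Ioi t).indicator (fun y => besselKi τ t * (y / √(y ^ 2 - t ^ 2) * besselKi 0 (y * c))) y

theorem measurable_abelKernel (τ c : ℝ) :
    Measurable (Function.uncurry (abelKernel τ c)) := by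
  have hm := measurable_besselKi 0
  have hm' := measurable_besselKi τ
  have : Function.uncurry (abelKernel τ c) = {p : ℝ × ℝ | p.2 < p.1}.indicator
      (fun p => besselKi τ p.2 * (p.1 / √(p.1 ^ 2 - p.2 ^ 2) * besselKi 0 (p.1 * c))) := by
    ext p
    simp [Function.uncurry, abelKernel, Set.indicator]
  rw [this]
  exact Measurable.indicator (by fun_prop) (measurableSet_lt measurable_snd measurable_fst)

theorem integral_abelKernel (τ : ℝ) {c t : ℝ} (hc : 0 < c) (ht : 0 < t) :
    ∫ y in Set.Ioi (0 : ℝ), abelKernel τ c y t =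
      π / (2 * c) * (besselKi τ t * Real.exp (-c * t)) := by
  unfold abelKernel
  rw [integral_indicator measurableSet_Ioi, Measure.restrict_restrict measurableSet_Ioi,
    Set.inter_eq_left.2 (Set.Ioi_subset_Ioi ht.le), integral_const_mul,
    integral_abel_besselKi hc ht]
  ring

theorem integral_norm_abelKernel (τ : ℝ) {c t : ℝ} (hc : 0 < c) (ht : 0 < t) :
    ∫ y in Set.Ioi (0 : ℝ), ‖abelKernel τ c y t‖ =
      π / (2 * c) * ‖besselKi τ t * Real.exp (-c * t)‖ := by
  unfold abelKernel
  simp_rw [norm_indicator_eq_indicator_norm]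
  rw [integral_indicator measurableSet_Ioi, Measure.restrict_restrict measurableSet_Ioi,
    Set.inter_eq_left.2 (Set.Ioi_subset_Ioi ht.le)]
  simp_rw [norm_mul (besselKi τ t)]
  rw [integral_const_mul, setIntegral_congr_fun measurableSet_Ioi
    (fun y hy => Real.norm_of_nonneg (abel_nonneg ht hy)),
    integral_abel_besselKi hc ht, Real.norm_of_nonneg (Real.exp_pos _).le]
  ring

theorem integrable_abelKernel (τ : ℝ) {c : ℝ} (hc : 0 < c) :
    Integrable (Function.uncurry (abelKernel τ c))
      ((volume.restrict (Set.Ioi 0)).prod (volume.restrict (Set.Ioi 0))) := by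
  rw [integrable_prod_iff' (measurable_abelKernel τ c).aestronglyMeasurable]
  constructor
  · filter_upwards [ae_restrict_mem measurableSet_Ioi] with t ht
    simp only [Function.uncurry, abelKernel]
    rw [integrable_indicator_iff measurableSet_Ioi, IntegrableOn,
      Measure.restrict_restrict measurableSet_Ioi,
      Set.inter_eq_left.2 (Set.Ioi_subset_Ioi (le_of_lt ht))]
    exact (integrableOn_abel_besselKi hc ht).const_mul _
  · have h := ((integrableOn_besselKi_mul_exp τ hc.le).norm).const_mul (π / (2 * c))
    refine h.congr ?_
    filter_upwards [ae_restrict_mem measurableSet_Ioi] with t ht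
    exact (integral_norm_abelKernel τ hc ht).symm

theorem integral_abelKernel_right (n : ℕ) (c : ℝ) {y : ℝ} (hy : 0 < y) :
    ∫ t in Set.Ioi (0 : ℝ), abelKernel n c y t = lebedevL n y * (y * besselKi 0 (y * c)) := by
  have h1 : ∀ t : ℝ, abelKernel n c y t = (Set.Iio y).indicator
      (fun t => besselKi n t / √(y ^ 2 - t ^ 2) * (y * besselKi 0 (y * c))) t := by
    intro t
    simp only [abelKernel, Set.indicator, Set.mem_Ioi, Set.mem_Iio]
    split_ifs
    · ring
    · rfl
  simp_rw [h1]
  rw [integral_indicator measurableSet_Iio, Measure.restrict_restrict measurableSet_Iio,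
    Set.inter_comm, Set.Ioi_inter_Iio, integral_mul_const, lebedevL,
    intervalIntegral.integral_of_le hy.le, integral_Ioc_eq_integral_Ioo]

theorem integrableOn_lebedevL_mul (n : ℕ) {c : ℝ} (hc : 0 < c) :
    IntegrableOn (fun y => lebedevL n y * (y * besselKi 0 (y * c))) (Set.Ioi 0) := by
  refine (integrable_abelKernel n hc).integral_prod_left.congr ?_
  filter_upwards [ae_restrict_mem measurableSet_Ioi] with y hy
  exact integral_abelKernel_right n c hy

theorem integral_lebedevL_mul (n : ℕ) {c : ℝ} (hc : 0 < c) :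
    ∫ y in Set.Ioi (0 : ℝ), lebedevL n y * (y * besselKi 0 (y * c)) =
      π / (2 * c) * ∫ t in Set.Ioi (0 : ℝ), besselKi n t * Real.exp (-c * t) := by
  rw [← integral_const_mul,
    ← setIntegral_congr_fun measurableSet_Ioi (fun t ht => integral_abelKernel n hc ht),
    ← setIntegral_congr_fun measurableSet_Ioi (fun y hy => integral_abelKernel_right n c hy)]
  exact integral_integral_swap (integrable_abelKernel n hc)

/-- A bound uniform in `c ≥ 1`, which dominates the integral over `u` with `c = cosh u`. -/
theorem integral_norm_lebedevL_mul_le (n : ℕ) {c : ℝ} (hc : 1 ≤ c) :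
    ∫ y in Set.Ioi (0 : ℝ), ‖lebedevL n y * (y * besselKi 0 (y * c))‖ ≤
      π / 2 * ∫ t in Set.Ioi (0 : ℝ), ‖besselKi n t‖ := by
  have hc0 : 0 < c := by linarith
  have hK : IntegrableOn (fun t => besselKi n t) (Set.Ioi 0) := by
    simpa using integrableOn_besselKi_mul_exp n le_rfl
  calc ∫ y in Set.Ioi (0 : ℝ), ‖lebedevL n y * (y * besselKi 0 (y * c))‖
      ≤ ∫ y in Set.Ioi (0 : ℝ), ∫ t in Set.Ioi (0 : ℝ), ‖abelKernel n c y t‖ := by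
        refine setIntegral_mono_on (integrableOn_lebedevL_mul n hc0).norm
          (integrable_abelKernel n hc0).norm.integral_prod_left measurableSet_Ioi fun y hy => ?_
        rw [← integral_abelKernel_right n c hy]
        exact norm_integral_le_integral_norm _
    _ = ∫ t in Set.Ioi (0 : ℝ), ∫ y in Set.Ioi (0 : ℝ), ‖abelKernel n c y t‖ :=
        integral_integral_swap (integrable_abelKernel n hc0).norm
    _ = ∫ t in Set.Ioi (0 : ℝ), π / (2 * c) * ‖besselKi n t * Real.exp (-c * t)‖ :=
        setIntegral_congr_fun measurableSet_Ioi fun t ht => integral_norm_abelKernel n hc0 ht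
    _ ≤ ∫ t in Set.Ioi (0 : ℝ), π / 2 * ‖besselKi n t‖ := by
        refine setIntegral_mono_on
          ((integrableOn_besselKi_mul_exp n hc0.le).norm.const_mul _)
          (hK.norm.const_mul _) measurableSet_Ioi fun t ht => ?_
        have ht' : (0 : ℝ) < t := ht
        rw [norm_mul]
        have h1 : ‖Real.exp (-c * t)‖ ≤ 1 := by
          rw [Real.norm_of_nonneg (Real.exp_pos _).le, Real.exp_le_one_iff]
          nlinarith
        have h2 : π / (2 * c) ≤ π / 2 := by
          gcongr
          linarith
        exact mul_le_mul h2 (mul_le_of_le_one_right (norm_nonneg _) h1) (by positivity)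
          (by positivity)
    _ = _ := integral_const_mul _ _

theorem aestronglyMeasurable_lebedevL (n : ℕ) :
    AEStronglyMeasurable (lebedevL n) (volume.restrict (Set.Ioi 0)) := by
  have hm := measurable_besselKi n
  have h : StronglyMeasurable fun y : ℝ => ∫ t in Set.Ioi (0 : ℝ),
      {p : ℝ × ℝ | p.2 < p.1}.indicator
        (fun p => besselKi n p.2 / √(p.1 ^ 2 - p.2 ^ 2)) (y, t) := by
    refine StronglyMeasurable.integral_prod_right' (f := {p : ℝ × ℝ | p.2 < p.1}.indicator
        (fun p => besselKi n p.2 / √(p.1 ^ 2 - p.2 ^ 2))) (Measurable.stronglyMeasurable ?_)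
    exact Measurable.indicator (by fun_prop) (measurableSet_lt measurable_snd measurable_fst)
  refine h.aestronglyMeasurable.congr ?_
  filter_upwards [ae_restrict_mem measurableSet_Ioi] with y hy
  have h1 : ∀ t : ℝ, {p : ℝ × ℝ | p.2 < p.1}.indicator
        (fun p => besselKi n p.2 / √(p.1 ^ 2 - p.2 ^ 2)) (y, t) = (Set.Iio y).indicator
      (fun t => besselKi n t / √(y ^ 2 - t ^ 2)) t := fun t => by
    simp [Set.indicator]
  simp_rw [h1]
  rw [integral_indicator measurableSet_Iio, Measure.restrict_restrict measurableSet_Iio,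
    Set.inter_comm, Set.Ioi_inter_Iio, lebedevL,
    intervalIntegral.integral_of_le (le_of_lt hy), integral_Ioc_eq_integral_Ioo]

theorem integral_lebedevL_mul_cosh {n : ℕ} (hn : 0 < n) {u : ℝ} (hu : u ≠ 0) :
    ∫ y in Set.Ioi (0 : ℝ), lebedevL n y * (y * besselKi 0 (y * Real.cosh u)) =
      π / (2 * Real.cosh u) * (π / Real.sinh (π * n) * (Real.sin (n * u) / Real.sinh u)) := by
  have hs : Real.sinh u ≠ 0 := fun h => hu (Real.sinh_eq_zero.1 h)
  have h := integral_cos_mul_inv_cosh_add_cosh (τ := n) (by exact_mod_cast hn) u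
  rw [integral_lebedevL_mul n (Real.cosh_pos u),
    integral_besselKi_mul_exp n (Real.cosh_pos u).le, eq_div_of_mul_eq hs ((mul_comm _ _).trans h)]
  ring

/-- Formula (2.7): `aₙ = (π/sinh(πn)) ∫_{−π}^{π} φ(u) sin(nu)/sinh(u) du`. -/
theorem lebedev_transform_eq_sine_coeff
    (C : ℝ) (hC : 0 < C) (ψ : ℝ → ℂ)
    (hper : ∀ u : ℝ, ψ (u + 2 * π) = ψ u)
    (hlip : ∀ u ∈ Set.Icc (-π) π, ∀ v ∈ Set.Icc (-π) π, ‖ψ u - ψ v‖ ≤ C * |u - v|)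
    (φ : ℝ → ℂ) (hφ : ∀ u : ℝ, φ u = ψ u * Real.sinh u)
    (f : ℝ → ℂ)
    (hf : ∀ x : ℝ, 0 < x → f x = ((2 * x / π : ℝ) : ℂ) *
      ∫ u in (-π)..π, ((besselKi 0 (x * Real.cosh u) : ℝ) : ℂ) * φ u * (Real.cosh u : ℂ))
    (a : ℕ → ℂ)
    (ha : ∀ n : ℕ, a n = ∫ y in Set.Ioi (0 : ℝ), ((lebedevL n y : ℝ) : ℂ) * f y) :
    ∀ n : ℕ, 0 < n →
      a n = ((π / Real.sinh (π * n) : ℝ) : ℂ) *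
        ∫ u in (-π)..π, φ u * ((Real.sin (n * u) / Real.sinh u : ℝ) : ℂ) := by
  intro n hn
  have hππ : -π ≤ π := by linarith [Real.pi_pos]
  have hψc : ContinuousOn ψ (Set.Icc (-π) π) := by
    refine LipschitzOnWith.continuousOn (K := C.toNNReal) ?_
    refine LipschitzOnWith.of_dist_le_mul fun u hu v hv => ?_
    rw [Real.coe_toNNReal _ hC.le, dist_eq_norm, Real.dist_eq]
    exact hlip u hu v hv
  -- the weight against which `K₀(y cosh u)` is integrated in `f`
  set g : ℝ → ℂ := fun u => ((2 / π : ℝ) : ℂ) * (φ u * (Real.cosh u : ℂ)) with hg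
  have hgc : ContinuousOn g (Set.Icc (-π) π) := by
    have : g = fun u => ((2 / π : ℝ) : ℂ) * ((ψ u * (Real.sinh u : ℂ)) * (Real.cosh u : ℂ)) := by
      ext u
      rw [hg]
      simp only [hφ]
    rw [this]
    have h1 : Continuous fun u : ℝ => (Real.sinh u : ℂ) :=
      Complex.continuous_ofReal.comp Real.continuous_sinh
    have h2 : Continuous fun u : ℝ => (Real.cosh u : ℂ) :=
      Complex.continuous_ofReal.comp Real.continuous_cosh
    exact continuousOn_const.mul ((hψc.mul h1.continuousOn).mul h2.continuousOn)
  have hgi : IntegrableOn g (Set.Ioc (-π) π) :=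
    (hgc.integrableOn_compact isCompact_Icc).mono_set Set.Ioc_subset_Icc_self
  have hm := measurable_besselKi 0
  set H : ℝ → ℝ → ℂ := fun y u =>
    ((lebedevL n y * (y * besselKi 0 (y * Real.cosh u)) : ℝ) : ℂ) * g u with hH
  have hHm : AEStronglyMeasurable (Function.uncurry H)
      ((volume.restrict (Set.Ioi 0)).prod (volume.restrict (Set.Ioc (-π) π))) := by
    have h1 := (aestronglyMeasurable_lebedevL n).comp_fst (ν := volume.restrict (Set.Ioc (-π) π))
    have h2 := hgi.aestronglyMeasurable.comp_snd (μ := volume.restrict (Set.Ioi (0 : ℝ)))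
    have h3 : Measurable fun p : ℝ × ℝ => p.1 * besselKi 0 (p.1 * Real.cosh p.2) := by fun_prop
    exact (Complex.continuous_ofReal.comp_aestronglyMeasurable
      (h1.mul h3.aestronglyMeasurable)).mul h2
  have hHi : Integrable (Function.uncurry H)
      ((volume.restrict (Set.Ioi 0)).prod (volume.restrict (Set.Ioc (-π) π))) := by
    rw [integrable_prod_iff' hHm]
    constructor
    · refine ae_of_all _ fun u => ?_
      exact (integrableOn_lebedevL_mul n (Real.cosh_pos u)).ofReal.mul_const (g u)
    · refine (hgi.norm.const_mul (π / 2 * ∫ t in Set.Ioi (0 : ℝ), ‖besselKi n t‖)).mono'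
        hHm.norm.prod_swap.integral_prod_right' (ae_of_all _ fun u => ?_)
      rw [Real.norm_of_nonneg (integral_nonneg fun v => norm_nonneg _)]
      simp only [hH, Function.uncurry, norm_mul _ (g u), Complex.norm_real]
      rw [integral_mul_const]
      exact mul_le_mul_of_nonneg_right
        (integral_norm_lebedevL_mul_le n (Real.one_le_cosh u)) (norm_nonneg _)
  have h1 : a n = ∫ y in Set.Ioi (0 : ℝ), ∫ u in Set.Ioc (-π) π, H y u := by
    rw [ha]
    refine setIntegral_congr_fun measurableSet_Ioi fun y hy => ?_
    rw [hf y hy, intervalIntegral.integral_of_le hππ, ← integral_const_mul, ← integral_const_mul]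
    congr 1
    ext u
    simp only [hH, hg]
    push_cast
    ring
  rw [h1, integral_integral_swap hHi, intervalIntegral.integral_of_le hππ, ← integral_const_mul]
  refine integral_congr_ae ?_
  -- at `u = 0` the quotient `sin (n u) / sinh u` is a junk value, but a point is null
  have hne : ∀ᵐ u : ℝ ∂(volume.restrict (Set.Ioc (-π) π)), u ≠ 0 :=
    ae_restrict_of_ae (Measure.ae_ne volume 0)
  filter_upwards [hne] with u hu
  have hc : (Real.cosh u : ℂ) ≠ 0 := by exact_mod_cast (Real.cosh_pos u).ne'
  have hp : (π : ℂ) ≠ 0 := by exact_mod_cast Real.pi_ne_zero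
  simp only [hH]
  rw [integral_mul_const, integral_complex_ofReal, integral_lebedevL_mul_cosh hn hu]
  simp only [hg]
  rw [Complex.ofReal_mul (π / (2 * Real.cosh u)), Complex.ofReal_mul (π / Real.sinh (π * n))]
  have : ((π / (2 * Real.cosh u) : ℝ) : ℂ) * (((2 / π : ℝ) : ℂ) * (Real.cosh u : ℂ)) = 1 := by
    rw [Complex.ofReal_div, Complex.ofReal_div, Complex.ofReal_mul, Complex.ofReal_ofNat]
    field_simp
  linear_combination ((π / Real.sinh (π * n) : ℝ) : ℂ) *
    ((Real.sin (n * u) / Real.sinh u : ℝ) : ℂ) * φ u * this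
end

section
/- Let ψ : ℝ → ℂ be a 2π-periodic function satisfying the Lipschitz condition |ψ(u) − ψ(v)| ≤ C|u − v| for all u, v ∈ [−π, π], let φ(u) = ψ(u) sinh(u), and let f(x) = (2x/π) ∫_{−π}^{π} K₀(x cosh u) φ(u) cosh(u) du for x > 0. Then for every n ∈ ℕ the double integral ∫₀^∞ |K_{in}(t)| ∫_t^∞ |f(y)|/(y² − t²)^{1/2} dy dt is finite, and ∫₀^∞ (∫₀^y K_{in}(t)/(y² − t²)^{1/2} dt) f(y) dy = ∫₀^∞ K_{in}(t) (∫_t^∞ f(y)/(y² − t²)^{1/2} dy) dt. -/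
/-!
The kernel `g s = e^{-s/2} / √s` dominates everything. Since `√z ≤ e^{z/2}` and
`cosh u ≥ max(1, e^u / 2)`, the integral representation gives `|K_{iτ}(x)| ≤ B g(x)` for all `x > 0`
(`abs_besselKi_le`). As `ψ` is bounded on `[-π, π]`, it follows that `‖f y‖ ≤ M y g(y) = M √y e^{-y/2}`
(`exists_density_bound`). For `y > t > 0` one has `y² - t² ≥ y (y - t)`, hence
`‖f y‖ / √(y² - t²) ≤ M e^{-t/2} g(y - t)`, and the inner integral is at most `M e^{-t/2} ∫ g`.
The outer integral is then controlled by `∫ g` once more, and `∫ g` is a Gamma integral.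
The interchange of integrals is Fubini's theorem for the integrand extended by zero off
`0 < t < y` (`lebedevIntegrand`).
-/

open MeasureTheory Real

/-- The dominating kernel `s ↦ e^{-s/2} / √s`, only used for `s > 0`. -/
noncomputable def domKernel (s : ℝ) : ℝ := Real.exp (-s / 2) / Real.sqrt s

lemma domKernel_nonneg (s : ℝ) : 0 ≤ domKernel s := by
  unfold domKernel; positivity

lemma domKernel_antitone {x z : ℝ} (hx : 0 < x) (h : x ≤ z) : domKernel z ≤ domKernel x := by
  unfold domKernel
  have := Real.sqrt_pos.2 hx
  gcongr

lemma integrableOn_domKernel : IntegrableOn domKernel (Set.Ioi 0) := by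
  have h := integrableOn_rpow_mul_exp_neg_mul_rpow (p := 1) (s := -1/2) (b := 1/2)
    (by norm_num) (by norm_num) (by norm_num)
  refine h.congr_fun (fun x hx => ?_) measurableSet_Ioi
  have hx' : (0:ℝ) < x := hx
  simp only [domKernel, Real.rpow_one]
  rw [show (-1/2 : ℝ) = -(1/2) by norm_num, Real.rpow_neg hx'.le, ← Real.sqrt_eq_rpow,
    div_eq_inv_mul]
  ring_nf

lemma lintegral_domKernel_lt_top :
    ∫⁻ s in Set.Ioi (0 : ℝ), ENNReal.ofReal (domKernel s) < ⊤ :=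
  integrableOn_domKernel.lintegral_lt_top

/-- One half of the exponent supplies the decay in `x`, the other half the factor `1 / √(x cosh u)`
that makes the bound integrable in `u`. -/
lemma exp_neg_mul_cosh_le {x u : ℝ} (hx : 0 < x) :
    Real.exp (-x * Real.cosh u) ≤ domKernel x * (Real.sqrt 2 * Real.exp (-u / 2)) := by
  have hc : 1 ≤ Real.cosh u := Real.one_le_cosh u
  have hc2 : Real.exp u / 2 ≤ Real.cosh u := by
    rw [Real.cosh_eq]; have := Real.exp_pos (-u); linarith
  have h1 : Real.sqrt (x * (Real.exp u / 2)) ≤ Real.exp (x * Real.cosh u / 2) := by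
    rw [Real.sqrt_le_left (Real.exp_pos _).le, ← Real.exp_nat_mul]
    have : x * (Real.exp u / 2) ≤ x * Real.cosh u := by gcongr
    have h3 := Real.add_one_le_exp (x * Real.cosh u)
    have h4 : ((2:ℕ):ℝ) * (x * Real.cosh u / 2) = x * Real.cosh u := by push_cast; ring
    rw [h4]; linarith
  have h2 : Real.sqrt (x * (Real.exp u / 2))
      = Real.sqrt x * (Real.exp (u / 2) / Real.sqrt 2) := by
    rw [Real.sqrt_mul hx.le, Real.sqrt_div (Real.exp_pos _).le, Real.exp_half]
  have hsx := Real.sqrt_pos.2 hx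
  have hs2 : 0 < Real.sqrt 2 := by positivity
  have hrhs : domKernel x * (Real.sqrt 2 * Real.exp (-u / 2))
      = Real.exp (-x / 2) * (Real.sqrt x * (Real.exp (u / 2) / Real.sqrt 2))⁻¹ := by
    rw [domKernel, neg_div 2 u, Real.exp_neg (u / 2)]
    field_simp
  rw [hrhs, show -x * Real.cosh u = -(x * Real.cosh u / 2) + -(x * Real.cosh u / 2) by ring,
    Real.exp_add]
  gcongr
  · nlinarith
  · rw [Real.exp_neg, ← h2]
    have : 0 < Real.sqrt (x * (Real.exp u / 2)) := by positivity
    gcongr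

/-- The constant `∫₀^∞ √2 e^{-u/2} du` in the bound of `K_{iτ}` by `domKernel`. -/
noncomputable def besselConst : ℝ :=
  ∫ u in Set.Ioi (0 : ℝ), Real.sqrt 2 * Real.exp (-u / 2)

lemma besselConst_nonneg : 0 ≤ besselConst :=
  integral_nonneg fun u => by positivity

lemma abs_besselKi_le (τ : ℝ) {x : ℝ} (hx : 0 < x) :
    |besselKi τ x| ≤ besselConst * domKernel x := by
  have hint : IntegrableOn (fun u : ℝ => Real.sqrt 2 * Real.exp (-u / 2)) (Set.Ioi 0) := by
    have h := (exp_neg_integrableOn_Ioi 0 (b := 1/2) (by norm_num)).const_mul (Real.sqrt 2)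
    refine h.congr (Filter.Eventually.of_forall fun u => ?_)
    simp only
    congr 2
    ring
  rw [besselConst, mul_comm, ← integral_const_mul, besselKi, ← Real.norm_eq_abs]
  refine norm_integral_le_of_norm_le (hint.const_mul _) (Filter.Eventually.of_forall fun u => ?_)
  rw [norm_mul, Real.norm_of_nonneg (Real.exp_pos _).le]
  calc Real.exp (-x * Real.cosh u) * ‖Real.cos (τ * u)‖ ≤ Real.exp (-x * Real.cosh u) * 1 := by
        gcongr; exact Real.abs_cos_le_one _
    _ ≤ _ := by rw [mul_one]; exact exp_neg_mul_cosh_le hx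

lemma stronglyMeasurable_besselKi (τ : ℝ) : StronglyMeasurable (besselKi τ) := by
  unfold besselKi
  apply StronglyMeasurable.integral_prod_right
    (f := fun x u : ℝ => Real.exp (-x * Real.cosh u) * Real.cos (τ * u))
  apply Continuous.stronglyMeasurable
  unfold Function.uncurry
  fun_prop

/-- The function defined by the `K₀`-integral of a continuous density is bounded by a multiple of
`y ↦ y e^{-y/2} / √y`, and it is the restriction to `(0, ∞)` of a measurable function. -/
lemma exists_density_bound (φ : ℝ → ℂ) (hφ : ContinuousOn φ (Set.Icc (-π) π)) (f : ℝ → ℂ)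
    (hf : ∀ x : ℝ, 0 < x → f x = ((2 * x / π : ℝ) : ℂ) *
      ∫ u in (-π)..π, ((besselKi 0 (x * Real.cosh u) : ℝ) : ℂ) * φ u * (Real.cosh u : ℂ)) :
    ∃ (F : ℝ → ℂ) (M : ℝ), StronglyMeasurable F ∧ 0 ≤ M ∧ (∀ x, 0 < x → f x = F x) ∧
      ∀ x, 0 < x → ‖F x‖ ≤ M * (x * domKernel x) := by
  have hpi : -π ≤ π := by linarith [Real.pi_pos]
  obtain ⟨D, hD⟩ := isCompact_Icc.exists_bound_of_continuousOn
    (hφ.mul (Complex.continuous_ofReal.comp Real.continuous_cosh).continuousOn)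
  have hD0 : 0 ≤ D := (norm_nonneg _).trans (hD π ⟨hpi, le_rfl⟩)
  -- A globally continuous extension makes the parametric integral measurable.
  set φ' : ℝ → ℂ := Set.IccExtend hpi ((Set.Icc (-π) π).domRestrict φ) with hφ'
  have hφ'c : Continuous φ' := hφ.domRestrict.Icc_extend'
  have hφ'eq : ∀ u ∈ Set.Icc (-π) π, φ' u = φ u := fun u hu => by
    rw [hφ', Set.IccExtend_of_mem _ _ hu]; rfl
  refine ⟨fun x => ((2 * x / π : ℝ) : ℂ) *
      ∫ u in Set.Ioc (-π) π,
        ((besselKi 0 (x * Real.cosh u) : ℝ) : ℂ) * φ' u * (Real.cosh u : ℂ),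
    2 / π * (besselConst * D * (2 * π)), ?_, ?_, ?_, ?_⟩
  · apply StronglyMeasurable.mul
    · apply Continuous.stronglyMeasurable; fun_prop
    · apply StronglyMeasurable.integral_prod_right
        (f := fun x u : ℝ => ((besselKi 0 (x * Real.cosh u) : ℝ) : ℂ) * φ' u * (Real.cosh u : ℂ))
      have h1 : StronglyMeasurable fun p : ℝ × ℝ => besselKi 0 (p.1 * Real.cosh p.2) :=
        (stronglyMeasurable_besselKi 0).comp_measurable
          (Continuous.measurable (by fun_prop))
      have h2 : StronglyMeasurable fun p : ℝ × ℝ => φ' p.2 :=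
        Continuous.stronglyMeasurable (by fun_prop)
      have h3 : StronglyMeasurable fun p : ℝ × ℝ => (Real.cosh p.2 : ℂ) :=
        (Complex.continuous_ofReal.comp
          (Real.continuous_cosh.comp continuous_snd)).stronglyMeasurable
      exact ((Complex.continuous_ofReal.comp_stronglyMeasurable h1).mul h2).mul h3
  · have := besselConst_nonneg
    have := Real.pi_pos
    positivity
  · intro x hx
    rw [hf x hx, intervalIntegral.integral_of_le hpi]
    congr 1
    refine setIntegral_congr_fun measurableSet_Ioc fun u hu => ?_
    simp only [hφ'eq u (Set.Ioc_subset_Icc_self hu)]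
  · intro x hx
    have hb : ‖∫ u in Set.Ioc (-π) π,
        ((besselKi 0 (x * Real.cosh u) : ℝ) : ℂ) * φ' u * (Real.cosh u : ℂ)‖
        ≤ (besselConst * domKernel x * D) * (2 * π) := by
      have := norm_setIntegral_le_of_norm_le_const (μ := volume) (s := Set.Ioc (-π) π)
        (f := fun u : ℝ => ((besselKi 0 (x * Real.cosh u) : ℝ) : ℂ) * φ' u * (Real.cosh u : ℂ))
        (C := besselConst * domKernel x * D) (by simp) (fun u hu => ?_)
      · refine this.trans_eq ?_
        rw [Real.volume_real_Ioc_of_le hpi]; ring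
      · have hu' := Set.Ioc_subset_Icc_self hu
        have hle : x ≤ x * Real.cosh u := le_mul_of_one_le_right hx.le (Real.one_le_cosh u)
        have h1 := abs_besselKi_le 0 (hx.trans_le hle)
        have h2 := domKernel_antitone hx hle
        have h3 := hD u hu'
        have h0 := besselConst_nonneg
        rw [mul_assoc, norm_mul, hφ'eq u hu', Complex.norm_real, Real.norm_eq_abs]
        have h4 : |besselKi 0 (x * Real.cosh u)| ≤ besselConst * domKernel x :=
          h1.trans (by gcongr)
        exact mul_le_mul h4 h3 (norm_nonneg _) (mul_nonneg h0 (domKernel_nonneg _))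
    have hp := Real.pi_pos
    rw [norm_mul, Complex.norm_real, Real.norm_of_nonneg (by positivity)]
    calc _ ≤ 2 * x / π * ((besselConst * domKernel x * D) * (2 * π)) := by gcongr
      _ = _ := by ring

lemma mul_domKernel_div_le {t y : ℝ} (ht : 0 < t) (hy : t < y) :
    y * domKernel y / Real.sqrt (y ^ 2 - t ^ 2) ≤ Real.exp (-t / 2) * domKernel (y - t) := by
  have hy0 : 0 < y := ht.trans hy
  have hyt : 0 < y - t := sub_pos.2 hy
  have hs : Real.sqrt y * Real.sqrt (y - t) ≤ Real.sqrt (y ^ 2 - t ^ 2) := by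
    rw [← Real.sqrt_mul hy0.le]
    apply Real.sqrt_le_sqrt
    nlinarith
  have h1 := Real.sqrt_pos.2 hy0
  have h2 := Real.sqrt_pos.2 hyt
  have hnum : y * domKernel y = Real.sqrt y * Real.exp (-y / 2) := by
    rw [domKernel]
    field_simp
    rw [Real.sq_sqrt hy0.le]
  rw [hnum]
  calc _ ≤ Real.sqrt y * Real.exp (-y / 2) / (Real.sqrt y * Real.sqrt (y - t)) := by gcongr
    _ = _ := by
      rw [domKernel, show -y / 2 = -t / 2 + -(y - t) / 2 by ring, Real.exp_add]
      field_simp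

lemma lintegral_inner_le {F : ℝ → ℂ} {M : ℝ} (hM : 0 ≤ M)
    (hF : ∀ x, 0 < x → ‖F x‖ ≤ M * (x * domKernel x)) {t : ℝ} (ht : 0 < t) :
    ∫⁻ y in Set.Ioi t, ENNReal.ofReal (‖F y‖ / Real.sqrt (y ^ 2 - t ^ 2)) ≤
      ENNReal.ofReal (M * Real.exp (-t / 2)) *
        ∫⁻ s in Set.Ioi (0 : ℝ), ENNReal.ofReal (domKernel s) := by
  have hshift : ∫⁻ y in Set.Ioi t, ENNReal.ofReal (domKernel (y - t))
      = ∫⁻ s in Set.Ioi (0 : ℝ), ENNReal.ofReal (domKernel s) := by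
    rw [← lintegral_indicator measurableSet_Ioi, ← lintegral_indicator measurableSet_Ioi,
      ← lintegral_sub_right_eq_self ((Set.Ioi (0 : ℝ)).indicator _) t]
    refine lintegral_congr fun y => ?_
    simp [Set.indicator_apply, sub_pos]
  rw [← hshift, ← lintegral_const_mul' _ _ ENNReal.ofReal_ne_top]
  refine setLIntegral_mono' measurableSet_Ioi fun y hy => ?_
  have hy' : t < y := hy
  rw [← ENNReal.ofReal_mul (by positivity)]
  apply ENNReal.ofReal_le_ofReal
  calc ‖F y‖ / Real.sqrt (y ^ 2 - t ^ 2)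
      ≤ M * (y * domKernel y) / Real.sqrt (y ^ 2 - t ^ 2) := by
        gcongr; exact hF y (ht.trans hy')
    _ = M * (y * domKernel y / Real.sqrt (y ^ 2 - t ^ 2)) := by ring
    _ ≤ M * (Real.exp (-t / 2) * domKernel (y - t)) := by
        gcongr; exact mul_domKernel_div_le ht hy'
    _ = _ := by ring

lemma lintegral_double_lt_top {F : ℝ → ℂ} {M : ℝ} (hM : 0 ≤ M)
    (hF : ∀ x, 0 < x → ‖F x‖ ≤ M * (x * domKernel x)) (τ : ℝ) :
    ∫⁻ t in Set.Ioi (0 : ℝ), ENNReal.ofReal |besselKi τ t| *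
      ∫⁻ y in Set.Ioi t, ENNReal.ofReal (‖F y‖ / Real.sqrt (y ^ 2 - t ^ 2)) < ⊤ := by
  set G := ∫⁻ s in Set.Ioi (0 : ℝ), ENNReal.ofReal (domKernel s) with hG
  have hGtop : G < ⊤ := lintegral_domKernel_lt_top
  have hB := besselConst_nonneg
  have key : ∫⁻ t in Set.Ioi (0 : ℝ), ENNReal.ofReal |besselKi τ t| *
      ∫⁻ y in Set.Ioi t, ENNReal.ofReal (‖F y‖ / Real.sqrt (y ^ 2 - t ^ 2))
      ≤ ∫⁻ t in Set.Ioi (0 : ℝ),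
        (ENNReal.ofReal besselConst * (ENNReal.ofReal M * G)) * ENNReal.ofReal (domKernel t) := by
    refine setLIntegral_mono' measurableSet_Ioi fun t ht => ?_
    have ht' : (0:ℝ) < t := ht
    have h1 : ENNReal.ofReal |besselKi τ t|
        ≤ ENNReal.ofReal besselConst * ENNReal.ofReal (domKernel t) := by
      rw [← ENNReal.ofReal_mul hB]
      exact ENNReal.ofReal_le_ofReal (abs_besselKi_le τ ht')
    have h2 : ENNReal.ofReal (M * Real.exp (-t / 2)) ≤ ENNReal.ofReal M := by
      apply ENNReal.ofReal_le_ofReal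
      apply mul_le_of_le_one_right hM
      rw [Real.exp_le_one_iff]; linarith
    calc _ ≤ (ENNReal.ofReal besselConst * ENNReal.ofReal (domKernel t)) *
          (ENNReal.ofReal M * G) := by
          gcongr
          exact (lintegral_inner_le hM hF ht').trans (by gcongr)
      _ = _ := by ring
  refine key.trans_lt ?_
  have hc : ENNReal.ofReal besselConst * (ENNReal.ofReal M * G) < ⊤ :=
    ENNReal.mul_lt_top ENNReal.ofReal_lt_top (ENNReal.mul_lt_top ENNReal.ofReal_lt_top hGtop)
  rw [lintegral_const_mul' _ _ hc.ne]
  exact ENNReal.mul_lt_top hc hGtop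

/-- The integrand `K_{iτ}(t) F(y) / √(y² - t²)` on the sector `0 < t < y`, extended by zero. -/
noncomputable def lebedevIntegrand (τ : ℝ) (F : ℝ → ℂ) (t y : ℝ) : ℂ :=
  Set.indicator {p : ℝ × ℝ | 0 < p.1 ∧ p.1 < p.2}
    (fun p => ((besselKi τ p.1 : ℝ) : ℂ) * (F p.2 / ((Real.sqrt (p.2 ^ 2 - p.1 ^ 2) : ℝ) : ℂ)))
    (t, y)

lemma lebedevIntegrand_of_pos (τ : ℝ) (F : ℝ → ℂ) {t : ℝ} (ht : 0 < t) :
    lebedevIntegrand τ F t = Set.indicator (Set.Ioi t) (fun y =>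
      ((besselKi τ t : ℝ) : ℂ) * (F y / ((Real.sqrt (y ^ 2 - t ^ 2) : ℝ) : ℂ))) := by
  ext y
  simp [lebedevIntegrand, Set.indicator_apply, ht]

lemma lebedevIntegrand_of_nonpos (τ : ℝ) (F : ℝ → ℂ) {t : ℝ} (ht : ¬ 0 < t) (y : ℝ) :
    lebedevIntegrand τ F t y = 0 := by
  simp [lebedevIntegrand, ht]

lemma integrable_lebedevIntegrand {F : ℝ → ℂ} (hFm : StronglyMeasurable F) {M : ℝ} (hM : 0 ≤ M)
    (hF : ∀ x, 0 < x → ‖F x‖ ≤ M * (x * domKernel x)) (τ : ℝ) :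
    Integrable (Function.uncurry (lebedevIntegrand τ F)) (volume.prod volume) := by
  have hms : StronglyMeasurable (Function.uncurry (lebedevIntegrand τ F)) := by
    have hset : MeasurableSet {p : ℝ × ℝ | 0 < p.1 ∧ p.1 < p.2} :=
      (measurableSet_lt measurable_const measurable_fst).inter
        (measurableSet_lt measurable_fst measurable_snd)
    have h1 : Measurable fun p : ℝ × ℝ => besselKi τ p.1 :=
      (stronglyMeasurable_besselKi τ).measurable.comp measurable_fst
    have h2 : Measurable fun p : ℝ × ℝ => F p.2 := hFm.measurable.comp measurable_snd
    have h3 : Measurable fun p : ℝ × ℝ => Real.sqrt (p.2 ^ 2 - p.1 ^ 2) :=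
      Continuous.measurable (by fun_prop)
    exact ((((Complex.measurable_ofReal.comp h1).mul
      (h2.div (Complex.measurable_ofReal.comp h3))).indicator hset)).stronglyMeasurable
  refine ⟨hms.aestronglyMeasurable, ?_⟩
  rw [HasFiniteIntegral, lintegral_prod _ hms.enorm.aemeasurable]
  refine lt_of_le_of_lt (le_of_eq ?_) (lintegral_double_lt_top hM hF τ)
  rw [← lintegral_indicator measurableSet_Ioi]
  refine lintegral_congr fun t => ?_
  by_cases ht : 0 < t
  · rw [Set.indicator_of_mem (show t ∈ Set.Ioi (0:ℝ) from ht),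
      ← lintegral_const_mul' _ _ ENNReal.ofReal_ne_top, ← lintegral_indicator measurableSet_Ioi]
    refine lintegral_congr fun y => ?_
    rw [Function.uncurry_apply_pair, lebedevIntegrand_of_pos τ F ht]
    by_cases hy : y ∈ Set.Ioi t
    · rw [Set.indicator_of_mem hy, Set.indicator_of_mem hy, ← ENNReal.ofReal_mul (abs_nonneg _),
        ← ofReal_norm, norm_mul, norm_div, Complex.norm_real, Complex.norm_real,
        Real.norm_eq_abs, Real.norm_of_nonneg (Real.sqrt_nonneg _)]
    · rw [Set.indicator_of_notMem hy, Set.indicator_of_notMem hy, enorm_zero]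
  · rw [Set.indicator_of_notMem (show t ∉ Set.Ioi (0:ℝ) from ht)]
    simp [lebedevIntegrand_of_nonpos τ F ht]

lemma integral_lebedevIntegrand_snd (τ : ℝ) (F : ℝ → ℂ) :
    ∫ t, ∫ y, lebedevIntegrand τ F t y =
      ∫ t in Set.Ioi (0 : ℝ), ((besselKi τ t : ℝ) : ℂ) *
          ∫ y in Set.Ioi t, F y / ((Real.sqrt (y ^ 2 - t ^ 2) : ℝ) : ℂ) := by
  rw [← integral_indicator measurableSet_Ioi]
  refine integral_congr_ae (Filter.Eventually.of_forall fun t => ?_)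
  by_cases ht : 0 < t
  · simp only
    rw [Set.indicator_of_mem (show t ∈ Set.Ioi (0:ℝ) from ht), lebedevIntegrand_of_pos τ F ht,
      integral_indicator measurableSet_Ioi, integral_const_mul]
  · simp only
    rw [Set.indicator_of_notMem (show t ∉ Set.Ioi (0:ℝ) from ht)]
    simp [lebedevIntegrand_of_nonpos τ F ht]

lemma integral_lebedevIntegrand_fst (τ : ℝ) (F : ℝ → ℂ) :
    ∫ y, ∫ t, lebedevIntegrand τ F t y =
      ∫ y in Set.Ioi (0 : ℝ),
          ((∫ t in (0 : ℝ)..y, besselKi τ t / Real.sqrt (y ^ 2 - t ^ 2) : ℝ) : ℂ) * F y := by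
  rw [← integral_indicator measurableSet_Ioi]
  refine integral_congr_ae (Filter.Eventually.of_forall fun y => ?_)
  by_cases hy : 0 < y
  · simp only
    rw [Set.indicator_of_mem (show y ∈ Set.Ioi (0:ℝ) from hy),
      intervalIntegral.integral_of_le hy.le, integral_Ioc_eq_integral_Ioo, ← integral_complex_ofReal,
      ← integral_mul_const, ← integral_indicator measurableSet_Ioo]
    congr 1
    ext t
    simp only [lebedevIntegrand, Set.indicator_apply, Set.mem_ofPred_eq, Set.mem_Ioo]
    split_ifs
    · rw [Complex.ofReal_div]
      ring
    · rfl
  · simp only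
    rw [Set.indicator_of_notMem (show y ∉ Set.Ioi (0:ℝ) from hy)]
    have : ∀ t, lebedevIntegrand τ F t y = 0 := fun t => by
      have h : ¬ (0 < t ∧ t < y) := fun h => hy (h.1.trans h.2)
      simp only [lebedevIntegrand, Set.indicator_apply, Set.mem_ofPred_eq, h, if_false]
    simp [this]

/-- Absolute convergence of the double integral and the interchange of the order of
integration in (2.5). -/
theorem lebedev_fubini_interchange_first
    (C : ℝ) (hC : 0 < C) (ψ : ℝ → ℂ)
    (hper : ∀ u : ℝ, ψ (u + 2 * π) = ψ u)
    (hlip : ∀ u ∈ Set.Icc (-π) π, ∀ v ∈ Set.Icc (-π) π, ‖ψ u - ψ v‖ ≤ C * |u - v|)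
    (φ : ℝ → ℂ) (hφ : ∀ u : ℝ, φ u = ψ u * Real.sinh u)
    (f : ℝ → ℂ)
    (hf : ∀ x : ℝ, 0 < x → f x = ((2 * x / π : ℝ) : ℂ) *
      ∫ u in (-π)..π, ((besselKi 0 (x * Real.cosh u) : ℝ) : ℂ) * φ u * (Real.cosh u : ℂ)) :
    ∀ n : ℕ, 0 < n →
      (∫⁻ t in Set.Ioi (0 : ℝ), ENNReal.ofReal |besselKi n t| *
          ∫⁻ y in Set.Ioi t, ENNReal.ofReal (‖f y‖ / Real.sqrt (y ^ 2 - t ^ 2)) < ⊤) ∧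
      (∫ y in Set.Ioi (0 : ℝ),
          ((∫ t in (0 : ℝ)..y, besselKi n t / Real.sqrt (y ^ 2 - t ^ 2) : ℝ) : ℂ) * f y) =
        ∫ t in Set.Ioi (0 : ℝ), ((besselKi n t : ℝ) : ℂ) *
          ∫ y in Set.Ioi t, f y / ((Real.sqrt (y ^ 2 - t ^ 2) : ℝ) : ℂ) := by
  intro n _
  have hψc : ContinuousOn ψ (Set.Icc (-π) π) := by
    have : LipschitzOnWith C.toNNReal ψ (Set.Icc (-π) π) :=
      LipschitzOnWith.of_dist_le_mul fun u hu v hv => by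
        rw [dist_eq_norm, Real.dist_eq, Real.coe_toNNReal C hC.le]
        exact hlip u hu v hv
    exact this.continuousOn
  have hφc : ContinuousOn φ (Set.Icc (-π) π) := by
    rw [show φ = fun u => ψ u * ((Real.sinh u : ℝ) : ℂ) from funext hφ]
    exact hψc.mul (Complex.continuous_ofReal.comp Real.continuous_sinh).continuousOn
  obtain ⟨F, M, hFm, hM, hfF, hF⟩ := exists_density_bound φ hφc f hf
  have hf' : ∀ x, 0 < x → ‖f x‖ ≤ M * (x * domKernel x) := fun x hx => by
    rw [hfF x hx]; exact hF x hx
  refine ⟨lintegral_double_lt_top hM hf' n, ?_⟩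
  have hL : ∫ y in Set.Ioi (0 : ℝ),
      ((∫ t in (0 : ℝ)..y, besselKi n t / Real.sqrt (y ^ 2 - t ^ 2) : ℝ) : ℂ) * f y
      = ∫ y in Set.Ioi (0 : ℝ),
      ((∫ t in (0 : ℝ)..y, besselKi n t / Real.sqrt (y ^ 2 - t ^ 2) : ℝ) : ℂ) * F y :=
    setIntegral_congr_fun measurableSet_Ioi fun y hy => by simp only [hfF y hy]
  have hR : ∫ t in Set.Ioi (0 : ℝ), ((besselKi n t : ℝ) : ℂ) *
        ∫ y in Set.Ioi t, f y / ((Real.sqrt (y ^ 2 - t ^ 2) : ℝ) : ℂ)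
      = ∫ t in Set.Ioi (0 : ℝ), ((besselKi n t : ℝ) : ℂ) *
        ∫ y in Set.Ioi t, F y / ((Real.sqrt (y ^ 2 - t ^ 2) : ℝ) : ℂ) :=
    setIntegral_congr_fun measurableSet_Ioi fun t ht => by
      have ht' : (0:ℝ) < t := ht
      refine congrArg _ ?_
      exact setIntegral_congr_fun measurableSet_Ioi fun y hy => by
        simp only [hfF y (ht'.trans hy)]
  rw [hL, hR, ← integral_lebedevIntegrand_fst, ← integral_lebedevIntegrand_snd]
  exact (integral_integral_swap (integrable_lebedevIntegrand hFm hM hF n)).symm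
end
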